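/- Let A be a σ-unital non-elementary algebraically simple C*-algebra with QT(A) ≠ ∅, and let a, b ∈ (A⊗K)_+. Assume that either (1) d_τ(a) + ω(a) < d_τ(b) for all τ ∈ \overline{QT(A)}^w, or (2) there exists r > 0 such that d_τ(a) + r < d_τ(b) for all τ ∈ \overline{QT(A)}^w. Then there exist two mutually orthogonal nonzero positive contractions b₀, b₁ ∈ Her(b) such that d_τ(a) < d_τ(b₁) for all τ ∈ \overline{QT(A)}^w. -/

import Mathlib

open scoped ENNReal
open Filter Topology

noncomputable section

namespace Paper

/-! ### Generic definitions in a (non-unital) C*-algebra -/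

variable (R : Type*) [NonUnitalCStarAlgebra R] [PartialOrder R] [StarOrderedRing R]

variable {R} in
/-- The hereditary C*-subalgebra generated by `b`, i.e. `closure (b R b)`. -/
def her (b : R) : Set R := closure {x : R | ∃ y : R, x = b * y * b}

/-- `I` is a (not necessarily closed) two-sided ideal of the subalgebra `B`. -/
def IsIdealIn (B I : Set R) : Prop :=
  I ⊆ B ∧ (0 : R) ∈ I ∧ (∀ x ∈ I, ∀ y ∈ I, x + y ∈ I) ∧ (∀ x ∈ I, -x ∈ I) ∧
    (∀ x ∈ I, ∀ b ∈ B, x * b ∈ I ∧ b * x ∈ I)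

variable {R} in
/-- The Pedersen ideal of the subalgebra `B`: the minimal dense two-sided ideal of `B`,
equivalently the intersection of all dense two-sided ideals of `B`. -/
def pedersenIn (B : Set R) : Set R :=
  ⋂ I ∈ {I : Set R | IsIdealIn R B I ∧ B ⊆ closure I}, I

/-- The Pedersen ideal of `R`. -/
def pedersen : Set R := pedersenIn (Set.univ : Set R)

variable {R} in
/-- Cuntz subequivalence `a ≲ b`. -/
def CuntzLE (a b : R) : Prop :=
  ∃ x : ℕ → R, Tendsto (fun n => ‖a - star (x n) * b * x n‖) atTop (𝓝 0)

variable {R} in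
/-- Cuntz subequivalence relative to a subset `B` (the `xₙ` are taken in `B`). -/
def CuntzLEIn (B : Set R) (a b : R) : Prop :=
  ∃ x : ℕ → R, (∀ n, x n ∈ B) ∧ Tendsto (fun n => ‖a - star (x n) * b * x n‖) atTop (𝓝 0)

variable {R} in
/-- Cuntz equivalence `a ∼ b`. -/
def CuntzEq (a b : R) : Prop := CuntzLE a b ∧ CuntzLE b a

/-- The cut-off function `f_ε`: `0` on `[0, ε/2]`, `1` on `[ε, ∞)`, linear in between. -/
def cutoff (ε : ℝ) : ℝ → ℝ := fun t => min 1 (max 0 (2 * t / ε - 1))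

variable {R} in
/-- `f_ε(a)`, via the (non-unital) continuous functional calculus. -/
def fEps (ε : ℝ) (a : R) : R := cfcₙ (cutoff ε) a

/-- A densely defined 2-quasitrace on `R` (recorded by its values on positive elements;
the value on non-positive elements is normalised to `0`). -/
structure QuasiTrace : Type _ where
  toFun : R → ℝ≥0∞
  zero_of_not_nonneg : ∀ a : R, ¬ (0 ≤ a) → toFun a = 0
  map_zero : toFun 0 = 0
  map_smul : ∀ (r : ℝ) (a : R), 0 < r → 0 ≤ a → toFun (r • a) = ENNReal.ofReal r * toFun a
  map_add_of_commute : ∀ a b : R, 0 ≤ a → 0 ≤ b → a * b = b * a →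
    toFun (a + b) = toFun a + toFun b
  map_star_mul_self : ∀ x : R, toFun (star x * x) = toFun (x * star x)
  lowerSemicontinuousOn : LowerSemicontinuousOn toFun {a : R | 0 ≤ a}
  finite_on_pedersen : ∀ a ∈ pedersen R, 0 ≤ a → toFun a < ∞
  exists_matrix_extension : ∃ σ : Matrix (Fin 2) (Fin 2) R → ℝ≥0∞,
    (∀ a : R, σ (fun i j => if i = 0 ∧ j = 0 then a else 0) = toFun a) ∧
    σ 0 = 0 ∧
    (∀ (r : ℝ) (x : Matrix (Fin 2) (Fin 2) R), 0 < r → (∃ y, x = star y * y) →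
      σ (r • x) = ENNReal.ofReal r * σ x) ∧
    (∀ x y : Matrix (Fin 2) (Fin 2) R, (∃ z, x = star z * z) → (∃ z, y = star z * z) →
      x * y = y * x → σ (x + y) = σ x + σ y) ∧
    (∀ x : Matrix (Fin 2) (Fin 2) R, σ (star x * x) = σ (x * star x))

/-- The topology of pointwise convergence on the Pedersen ideal. -/
instance : TopologicalSpace (QuasiTrace R) :=
  TopologicalSpace.induced (fun τ => fun a : pedersen R => τ.toFun a) inferInstance

variable {R}

/-- The zero quasitrace. -/
def QuasiTrace.IsZero (τ : QuasiTrace R) : Prop := ∀ a : R, τ.toFun a = 0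

/-- The dimension function `d_τ(a) = lim_{ε → 0} τ(f_ε(a))`. -/
def dTau (τ : QuasiTrace R) (a : R) : ℝ≥0∞ :=
  ⨆ n : ℕ, τ.toFun (fEps (1 / (n + 1)) a)

/-- `ω(a)` relative to a set `S` of quasitraces:
`lim_n sup {d_τ(a) - τ(f_{1/n}(a)) : τ ∈ S}`. -/
def omegaOn (S : Set (QuasiTrace R)) (a : R) : ℝ≥0∞ :=
  ⨅ n : ℕ, ⨆ τ ∈ S, (dTau τ a - τ.toFun (fEps (1 / (n + 1)) a))

/-- The seminorm `‖x‖_{2,S}`. -/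
def norm2On (S : Set (QuasiTrace R)) (x : R) : ℝ≥0∞ :=
  ⨆ τ ∈ S, (τ.toFun (star x * x)) ^ (1 / 2 : ℝ)

variable (R)

/-- `R` has (Blackadar's) strict comparison. -/
def StrictComparison : Prop :=
  ∀ a b : R, 0 ≤ a → 0 ≤ b →
    (∀ τ : QuasiTrace R, ¬ τ.IsZero → dTau τ a < dTau τ b) → CuntzLE a b

/-- `R` is a simple C*-algebra: it is nonzero and has no nontrivial closed two-sided ideals. -/
def IsSimpleCStar : Prop :=
  (∃ x : R, x ≠ 0) ∧
    ∀ I : TwoSidedIdeal R, IsClosed (I : Set R) → (I : Set R) = {0} ∨ (I : Set R) = Set.univ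

/-- `R` is σ-unital: it contains a strictly positive element `h`
(equivalently, `Her(h) = R`). -/
def SigmaUnital : Prop := ∃ h : R, 0 ≤ h ∧ her h = Set.univ

/-- `R` is elementary: isomorphic to the algebra of compact operators on some Hilbert space. -/
def IsElementary : Prop :=
  ∃ (H : Type) (_ : NormedAddCommGroup H) (_ : InnerProductSpace ℂ H) (_ : CompleteSpace H)
    (φ : R →⋆ₙₐ[ℂ] (H →L[ℂ] H)), Function.Injective φ ∧
      Set.range φ = {T : H →L[ℂ] H | IsCompactOperator (⇑T)}

/-- `R` is purely infinite: `R ≇ ℂ` and `b ≲ a` for all nonzero positive `a, b`. -/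
def PurelyInfinite : Prop :=
  (¬ ∃ φ : R →⋆ₙₐ[ℂ] ℂ, Function.Bijective φ) ∧
    ∀ a b : R, 0 ≤ a → 0 ≤ b → a ≠ 0 → b ≠ 0 → CuntzLE b a

/-- `R` is finite: its minimal unitization contains no non-unitary isometry. -/
def IsFiniteCStar : Prop :=
  ∀ v : Unitization ℂ R, star v * v = 1 → v * star v = 1

/-- `R` has stable rank one: the invertible elements are dense in the minimal unitization. -/
def StableRankOne : Prop := Dense {x : Unitization ℂ R | IsUnit x}

variable {R}

/-- `c` represents `n·[a]` in the Cuntz semigroup: it is the sum of `n` mutually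
orthogonal positive elements, each Cuntz equivalent to `a`. -/
def IsNFoldRep (n : ℕ) (a c : R) : Prop :=
  ∃ f : Fin n → R, (∀ i, 0 ≤ f i) ∧ (∀ i, CuntzEq (f i) a) ∧
    (∀ i j, i ≠ j → f i * f j = 0) ∧ c = ∑ i, f i

/-- `s` represents the supremum of the increasing sequence of Cuntz classes `[y n]`. -/
def IsCuntzLUB (y : ℕ → R) (s : R) : Prop :=
  (∀ n, CuntzLE (y n) s) ∧ ∀ c : R, 0 ≤ c → (∀ n, CuntzLE (y n) c) → CuntzLE s c

/-- `[x] ≪ [y]` in the Cuntz semigroup. -/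
def CuntzWayBelow (x y : R) : Prop :=
  ∀ yseq : ℕ → R, (∀ n, 0 ≤ yseq n) → (∀ n, CuntzLE (yseq n) (yseq (n + 1))) →
    ∀ s : R, 0 ≤ s → IsCuntzLUB yseq s → CuntzLE y s → ∃ n₀, CuntzLE x (yseq n₀)

variable (R)

/-- The Cuntz semigroup of `R` is almost unperforated. -/
def AlmostUnperforated : Prop :=
  ∀ (a b : R) (k : ℕ), 1 ≤ k → 0 ≤ a → 0 ≤ b →
    (∃ c d : R, IsNFoldRep (k + 1) a c ∧ IsNFoldRep k b d ∧ CuntzLE c d) → CuntzLE a b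

/-- The Cuntz semigroup of `R` is almost divisible. -/
def AlmostDivisible : Prop :=
  ∀ x y : R, 0 ≤ x → 0 ≤ y → CuntzWayBelow x y → ∀ n : ℕ, 1 ≤ n →
    ∃ z : R, 0 ≤ z ∧ (∃ c : R, IsNFoldRep n z c ∧ CuntzLE c y) ∧
      (∃ c : R, IsNFoldRep (n + 1) z c ∧ CuntzLE x c)

/-! ### The stabilization `W ≅ A ⊗ K` -/

variable (A W : Type*) [NonUnitalCStarAlgebra A] [PartialOrder A] [StarOrderedRing A]
  [NonUnitalCStarAlgebra W] [PartialOrder W] [StarOrderedRing W]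

/-- A realization of `W` as the stabilization `A ⊗ K`: the maps `emb i j : a ↦ a ⊗ e_{ij}`
are isometric, satisfy the matrix-unit relations, and have dense joint linear span. -/
structure Stabilization : Type _ where
  emb : ℕ → ℕ → (A →ₗ[ℂ] W)
  emb_mul : ∀ (i j k l : ℕ) (a b : A),
    emb i j a * emb k l b = if j = k then emb i l (a * b) else 0
  emb_star : ∀ (i j : ℕ) (a : A), star (emb i j a) = emb j i (star a)
  norm_emb : ∀ (i j : ℕ) (a : A), ‖emb i j a‖ = ‖a‖
  dense_span : Dense (Submodule.span ℂ {w : W | ∃ (i j : ℕ) (a : A), w = emb i j a} : Set W)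

variable {A W}

/-- The set `QT(A)` of quasitraces normalized on `A ⊆ A ⊗ K`. -/
def QTSet (SB : Stabilization A W) : Set (QuasiTrace W) :=
  {τ | (⨆ a : {a : A // 0 ≤ a ∧ ‖a‖ ≤ 1}, τ.toFun (SB.emb 0 0 a)) = 1}

/-- The quasitraces normalized on the hereditary subalgebra `Her(c) ⊆ W`. -/
def QTSetHer (c : W) : Set (QuasiTrace W) :=
  {τ : QuasiTrace W |
    (⨆ a : {a : W // a ∈ her c ∧ 0 ≤ a ∧ ‖a‖ ≤ 1}, τ.toFun a) = 1}

/-- `ω(a) = 0` for `a ∈ W = A ⊗ K`, computed relative to `\overline{QT(Her(e))}^w`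
for any nonzero `e ∈ Ped(A)₊`. -/
def OmegaZero (SB : Stabilization A W) (a : W) : Prop :=
  ∀ e : A, 0 ≤ e → e ≠ 0 → e ∈ pedersen A →
    omegaOn (closure (QTSetHer (SB.emb 0 0 e))) a = 0

/-- `A` has tracial approximate oscillation zero. -/
def TAOZ (SB : Stabilization A W) : Prop :=
  ∀ e : A, 0 ≤ e → e ≠ 0 → e ∈ pedersen A →
    ∀ a : W, 0 ≤ a → a ∈ pedersen W →
      ∃ b : ℕ → W, (∀ n, 0 ≤ b n) ∧ (∀ n, ‖b n‖ ≤ 1) ∧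
        (∀ n, b n ∈ pedersenIn (her a)) ∧
        Tendsto (fun n => omegaOn (closure (QTSetHer (SB.emb 0 0 e))) (b n)) atTop (𝓝 0) ∧
        Tendsto (fun n => norm2On (closure (QTSetHer (SB.emb 0 0 e))) (a - b n)) atTop (𝓝 0)

/-! ### Affine functions on the quasitrace cone and the map `Γ` -/

variable (W) in
/-- `ρ = t·τ + (1-t)·σ` as quasitraces. -/
def IsCombo (t : ℝ) (τ σ ρ : QuasiTrace W) : Prop :=
  ∀ a : W, 0 ≤ a →
    ρ.toFun a = ENNReal.ofReal t * τ.toFun a + ENNReal.ofReal (1 - t) * σ.toFun a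

variable (W) in
/-- `f` is affine on the quasitrace cone. -/
def IsAffineQT (f : QuasiTrace W → ℝ≥0∞) : Prop :=
  ∀ t : ℝ, 0 ≤ t → t ≤ 1 → ∀ τ σ ρ : QuasiTrace W, IsCombo W t τ σ ρ →
    f ρ = ENNReal.ofReal t * f τ + ENNReal.ofReal (1 - t) * f σ

variable (W) in
/-- Membership in `Aff₊(QT̃(A))`. -/
def MemAffPlus (f : QuasiTrace W → ℝ≥0∞) : Prop :=
  (∀ τ, f τ = 0) ∨
    (Continuous f ∧ IsAffineQT W f ∧ (∀ τ, f τ < ∞) ∧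
      (∀ τ : QuasiTrace W, ¬ τ.IsZero → 0 < f τ) ∧
      (∀ τ : QuasiTrace W, τ.IsZero → f τ = 0))

variable (W) in
/-- Membership in `LAff₊(QT̃(A))`. -/
def MemLAffPlus (f : QuasiTrace W → ℝ≥0∞) : Prop :=
  ∃ g : ℕ → QuasiTrace W → ℝ≥0∞, (∀ n, MemAffPlus W (g n)) ∧
    (∀ n τ, g n τ ≤ g (n + 1) τ) ∧ ∀ τ, f τ = ⨆ n, g n τ

variable (W) in
/-- The canonical map `Γ : Cu(A) → LAff₊(QT̃(A))`, `Γ([a])(τ) = d_τ(a)`, is surjective. -/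
def GammaSurjective : Prop :=
  ∀ f : QuasiTrace W → ℝ≥0∞, MemLAffPlus W f →
    ∃ a : W, 0 ≤ a ∧ ∀ τ : QuasiTrace W, dTau τ a = f τ



/-! Part 1 -/

set_option linter.unusedSectionVars false
set_option linter.unusedVariables false
section Basics
variable {B : Type*} [NonUnitalCStarAlgebra B] [PartialOrder B] [StarOrderedRing B]

theorem cutoff_zero (ε : ℝ) : cutoff ε 0 = 0 := by simp [cutoff]

@[fun_prop]
theorem continuous_cutoff (ε : ℝ) : Continuous (cutoff ε) := by
  unfold cutoff
  fun_prop

theorem cutoff_nonneg (ε t : ℝ) : 0 ≤ cutoff ε t := by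
  simp [cutoff]

theorem cutoff_le_one (ε t : ℝ) : cutoff ε t ≤ 1 := by
  simp [cutoff]

theorem cutoff_eq_zero {ε t : ℝ} (hε : 0 < ε) (h : t ≤ ε / 2) : cutoff ε t = 0 := by
  have : 2 * t / ε - 1 ≤ 0 := by
    rw [sub_nonpos, div_le_one hε]; linarith
  simp [cutoff, max_eq_left this]

theorem cutoff_eq_one {ε t : ℝ} (hε : 0 < ε) (h : ε ≤ t) : cutoff ε t = 1 := by
  have : 1 ≤ 2 * t / ε - 1 := by
    rw [le_sub_iff_add_le, le_div_iff₀ hε]; linarith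
  simp [cutoff, this]

theorem qs_nonneg {a : B} (ha : 0 ≤ a) {x : ℝ} (hx : x ∈ quasispectrum ℝ a) : 0 ≤ x :=
  quasispectrum_nonneg_of_nonneg a ha x hx

theorem fEps_nonneg (ε : ℝ) (a : B) : 0 ≤ fEps ε a :=
  cfcₙ_nonneg fun x _ => cutoff_nonneg ε x

theorem fEps_norm_le (ε : ℝ) (a : B) : ‖fEps ε a‖ ≤ 1 :=
  norm_cfcₙ_le fun x _ => by
    rw [Real.norm_of_nonneg (cutoff_nonneg ε x)]; exact cutoff_le_one ε x

theorem fEps_star (ε : ℝ) (a : B) : star (fEps ε a) = fEps ε a :=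
  (IsSelfAdjoint.of_nonneg (fEps_nonneg ε a)).star_eq

/-- `f_ε (b) = b h(b) = h(b) b`. -/
theorem fEps_factor {ε : ℝ} (hε : 0 < ε) {b : B} (hb : 0 ≤ b) :
    ∃ h : B, fEps ε b = b * h ∧ fEps ε b = h * b := by
  have hsa : IsSelfAdjoint b := .of_nonneg hb
  have hpos : ∀ s : ℝ, max s (ε / 2) ≠ 0 := fun s =>
    (lt_of_lt_of_le (half_pos hε) (le_max_right _ _)).ne'
  have hc : Continuous fun s : ℝ => cutoff ε s / max s (ε / 2) :=
    (continuous_cutoff ε).div (by fun_prop) hpos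
  have key : ∀ s : ℝ, cutoff ε s = s * (cutoff ε s / max s (ε / 2)) := by
    intro s
    rcases le_total s (ε / 2) with h | h
    · simp [cutoff_eq_zero hε h]
    · rw [max_eq_left h]; field_simp [show s ≠ 0 by linarith]
  refine ⟨cfcₙ (fun s : ℝ => cutoff ε s / max s (ε / 2)) b, ?_, ?_⟩
  · conv_rhs => enter [1]; rw [← cfcₙ_id' ℝ b]
    rw [← cfcₙ_mul (fun s : ℝ => s) _ b (by fun_prop) rfl hc.continuousOn (by simp [cutoff_zero])]
    exact cfcₙ_congr fun s _ => key s
  · conv_rhs => enter [2]; rw [← cfcₙ_id' ℝ b]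
    rw [← cfcₙ_mul _ (fun s : ℝ => s) b hc.continuousOn (by simp [cutoff_zero]) (by fun_prop) rfl]
    exact cfcₙ_congr fun s _ => by rw [mul_comm]; exact key s

theorem norm_fEps_mul_sub_le {ε : ℝ} (hε : 0 < ε) {b : B} (hb : 0 ≤ b) :
    ‖fEps ε b * b - b‖ ≤ ε := by
  have hsa : IsSelfAdjoint b := .of_nonneg hb
  have : fEps ε b * b - b = cfcₙ (fun s => cutoff ε s * s - s) b := by
    rw [cfcₙ_sub (fun s => cutoff ε s * s) (fun s => s) b (by fun_prop) (by simp) (by fun_prop)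
      (by simp), cfcₙ_mul (cutoff ε) (fun s => s) b (by fun_prop) (cutoff_zero _) (by fun_prop)
      (by simp), cfcₙ_id' ℝ b]
    rfl
  rw [this]
  refine norm_cfcₙ_le fun s hs => ?_
  have h0 := qs_nonneg hb hs
  rcases le_total ε s with h | h
  · simp [cutoff_eq_one hε h, hε.le]
  · have h1 := cutoff_nonneg ε s
    have h2 := cutoff_le_one ε s
    rw [Real.norm_eq_abs, abs_le]
    constructor <;> nlinarith

theorem tendsto_one_div' : Tendsto (fun n : ℕ => (1 / ((n : ℝ) + 1))) atTop (𝓝 0) :=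
  tendsto_one_div_add_atTop_nhds_zero_nat

theorem one_div_pos' (n : ℕ) : 0 < (1 / ((n : ℝ) + 1)) := by positivity

theorem tendsto_fEps_mul {b : B} (hb : 0 ≤ b) :
    Tendsto (fun n : ℕ => fEps (1 / ((n : ℝ) + 1)) b * b) atTop (𝓝 b) := by
  rw [tendsto_iff_norm_sub_tendsto_zero]
  exact squeeze_zero (fun _ => norm_nonneg _)
    (fun n => norm_fEps_mul_sub_le (one_div_pos' n) hb) tendsto_one_div'

theorem tendsto_mul_fEps {b : B} (hb : 0 ≤ b) :
    Tendsto (fun n : ℕ => b * fEps (1 / ((n : ℝ) + 1)) b) atTop (𝓝 b) := by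
  have := (tendsto_fEps_mul hb).star
  simpa [fEps_star, (IsSelfAdjoint.of_nonneg hb).star_eq] using this

theorem isClosed_her (b : B) : IsClosed (her b) := isClosed_closure

theorem mul_mul_mem_her (b y : B) : b * y * b ∈ her b := subset_closure ⟨y, rfl⟩

theorem her_add {b x y : B} (hx : x ∈ her b) (hy : y ∈ her b) : x + y ∈ her b := by
  have : Set.MapsTo (fun p : B × B => p.1 + p.2)
      ({x : B | ∃ y : B, x = b * y * b} ×ˢ {x : B | ∃ y : B, x = b * y * b})
      {x : B | ∃ y : B, x = b * y * b} := by
    rintro ⟨_, _⟩ ⟨⟨u, rfl⟩, ⟨v, rfl⟩⟩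
    exact ⟨u + v, by simp [mul_add, add_mul]⟩
  have h2 := this.closure (by fun_prop)
  rw [closure_prod_eq] at h2
  exact h2 (Set.mk_mem_prod hx hy)

theorem her_smul {b x : B} (r : ℝ) (hx : x ∈ her b) : r • x ∈ her b := by
  have : Set.MapsTo (fun p : B => r • p) {x : B | ∃ y : B, x = b * y * b}
      {x : B | ∃ y : B, x = b * y * b} := by
    rintro _ ⟨u, rfl⟩
    exact ⟨r • u, by simp [mul_smul_comm, smul_mul_assoc]⟩
  exact this.closure (by fun_prop) hx

theorem her_neg {b x : B} (hx : x ∈ her b) : -x ∈ her b := by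
  simpa using her_smul (-1) hx

theorem her_sub {b x y : B} (hx : x ∈ her b) (hy : y ∈ her b) : x - y ∈ her b := by
  rw [sub_eq_add_neg]; exact her_add hx (her_neg hy)

theorem her_mul_mul {b x y : B} (w : B) (hx : x ∈ her b) (hy : y ∈ her b) :
    x * w * y ∈ her b := by
  have : Set.MapsTo (fun p : B × B => p.1 * w * p.2)
      ({x : B | ∃ y : B, x = b * y * b} ×ˢ {x : B | ∃ y : B, x = b * y * b})
      {x : B | ∃ y : B, x = b * y * b} := by
    rintro ⟨_, _⟩ ⟨⟨u, rfl⟩, ⟨v, rfl⟩⟩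
    exact ⟨u * b * w * b * v, by simp [mul_assoc]⟩
  have h2 := this.closure (by fun_prop)
  rw [closure_prod_eq] at h2
  exact h2 (Set.mk_mem_prod hx hy)

theorem her_mul {b x y : B} (hx : x ∈ her b) (hy : y ∈ her b) : x * y ∈ her b := by
  have : Set.MapsTo (fun p : B × B => p.1 * p.2)
      ({x : B | ∃ y : B, x = b * y * b} ×ˢ {x : B | ∃ y : B, x = b * y * b})
      {x : B | ∃ y : B, x = b * y * b} := by
    rintro ⟨_, _⟩ ⟨⟨u, rfl⟩, ⟨v, rfl⟩⟩
    exact ⟨u * b * b * v, by simp [mul_assoc]⟩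
  have h2 := this.closure (by fun_prop)
  rw [closure_prod_eq] at h2
  exact h2 (Set.mk_mem_prod hx hy)

theorem her_subset {b x : B} (hx : x ∈ her b) : her x ⊆ her b := by
  refine closure_minimal ?_ (isClosed_her b)
  rintro _ ⟨y, rfl⟩
  exact her_mul_mul y hx hx

theorem mul_eq_zero_of_mem_her {b x z : B} (hx : x ∈ her b) (h : b * z = 0) : x * z = 0 := by
  have : her b ⊆ {x : B | x * z = 0} := by
    refine closure_minimal ?_ (isClosed_eq (by fun_prop) continuous_const)
    rintro _ ⟨y, rfl⟩
    simp [mul_assoc, h]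
  exact this hx

theorem mul_eq_zero_of_mem_her' {b x z : B} (hx : x ∈ her b) (h : z * b = 0) : z * x = 0 := by
  have : her b ⊆ {x : B | z * x = 0} := by
    refine closure_minimal ?_ (isClosed_eq (by fun_prop) continuous_const)
    rintro _ ⟨y, rfl⟩
    simp [← mul_assoc, h]
  exact this hx

theorem fEps_mul_mem_her {ε : ℝ} (hε : 0 < ε) {b : B} (hb : 0 ≤ b) (x : B) :
    fEps ε b * x * fEps ε b ∈ her b := by
  obtain ⟨h, h1, h2⟩ := fEps_factor hε hb
  have : fEps ε b * x * fEps ε b = b * (h * x * h) * b := by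
    calc fEps ε b * x * fEps ε b = (b * h) * x * (h * b) := by rw [← h1, ← h2]
      _ = _ := by simp only [mul_assoc]
  rw [this]; exact mul_mul_mem_her _ _

theorem tendsto_fEps_mul_of_mem_her {b x : B} (hb : 0 ≤ b) (hx : x ∈ her b) :
    Tendsto (fun n : ℕ => fEps (1 / ((n : ℝ) + 1)) b * x) atTop (𝓝 x) := by
  rw [Metric.tendsto_atTop]
  intro ε hε
  obtain ⟨_, ⟨y, rfl⟩, hy⟩ := Metric.mem_closure_iff.1 hx (ε / 3) (by positivity)
  have h1 : Tendsto (fun n : ℕ => fEps (1 / ((n : ℝ) + 1)) b * (b * y * b)) atTop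
      (𝓝 (b * y * b)) := by
    have := (tendsto_fEps_mul hb).mul_const (y * b)
    simpa [mul_assoc] using this
  obtain ⟨N, hN⟩ := Metric.tendsto_atTop.1 h1 (ε / 3) (by positivity)
  refine ⟨N, fun n hn => ?_⟩
  have h2 := hN n hn
  set g := fEps (1 / ((n : ℝ) + 1)) b
  set z := b * y * b
  have h3 : dist (g * x) (g * z) ≤ dist x z := by
    rw [dist_eq_norm, dist_eq_norm, ← mul_sub]
    calc ‖g * (x - z)‖ ≤ ‖g‖ * ‖x - z‖ := norm_mul_le _ _
      _ ≤ 1 * ‖x - z‖ := by gcongr; exact fEps_norm_le _ _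
      _ = _ := one_mul _
  calc dist (g * x) x ≤ dist (g * x) (g * z) + dist (g * z) z + dist z x := dist_triangle4 _ _ _ _
    _ < ε / 3 + ε / 3 + ε / 3 := by
        rw [dist_comm z x]
        gcongr
        exact h3.trans_lt hy
    _ = ε := by ring

theorem her_star {b x : B} (hb : 0 ≤ b) (hx : x ∈ her b) : star x ∈ her b := by
  have : Set.MapsTo (fun p : B => star p) {x : B | ∃ y : B, x = b * y * b}
      {x : B | ∃ y : B, x = b * y * b} := by
    rintro _ ⟨u, rfl⟩
    exact ⟨star u, by simp [mul_assoc, (IsSelfAdjoint.of_nonneg hb).star_eq]⟩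
  exact this.closure (by fun_prop) hx

theorem tendsto_mul_fEps_of_mem_her {b x : B} (hb : 0 ≤ b) (hx : x ∈ her b) :
    Tendsto (fun n : ℕ => x * fEps (1 / ((n : ℝ) + 1)) b) atTop (𝓝 x) := by
  have := (tendsto_fEps_mul_of_mem_her hb (her_star hb hx)).star
  simpa [fEps_star] using this

theorem tendsto_conj_of_tendsto_mul {g : ℕ → B} (hg : ∀ n, ‖g n‖ ≤ 1) {x : B}
    (h1 : Tendsto (fun n => g n * x) atTop (𝓝 x)) (h2 : Tendsto (fun n => x * g n) atTop (𝓝 x)) :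
    Tendsto (fun n => g n * x * g n) atTop (𝓝 x) := by
  have h3 : Tendsto (fun n => g n * (x * g n - x)) atTop (𝓝 0) := by
    rw [tendsto_iff_norm_sub_tendsto_zero] at h2
    refine squeeze_zero_norm (fun n => ?_) h2
    calc ‖g n * (x * g n - x)‖ ≤ ‖g n‖ * ‖x * g n - x‖ := norm_mul_le _ _
      _ ≤ 1 * _ := by gcongr; exact hg n
      _ = _ := one_mul _
  have := h3.add h1
  simpa [mul_sub, mul_assoc] using this

theorem tendsto_conj_fEps_of_mem_her {b x : B} (hb : 0 ≤ b) (hx : x ∈ her b) :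
    Tendsto (fun n : ℕ => fEps (1 / ((n : ℝ) + 1)) b * x * fEps (1 / ((n : ℝ) + 1)) b)
      atTop (𝓝 x) :=
  tendsto_conj_of_tendsto_mul (fun _ => fEps_norm_le _ _) (tendsto_fEps_mul_of_mem_her hb hx)
    (tendsto_mul_fEps_of_mem_her hb hx)

theorem mem_her_of_tendsto {b x : B} (hb : 0 ≤ b)
    (h1 : Tendsto (fun n : ℕ => fEps (1 / ((n : ℝ) + 1)) b * x) atTop (𝓝 x))
    (h2 : Tendsto (fun n : ℕ => x * fEps (1 / ((n : ℝ) + 1)) b) atTop (𝓝 x)) : x ∈ her b :=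
  (isClosed_her b).mem_of_tendsto
    (tendsto_conj_of_tendsto_mul (fun _ => fEps_norm_le _ _) h1 h2)
    (Eventually.of_forall fun n => fEps_mul_mem_her (one_div_pos' n) hb x)

theorem mem_her_self {b : B} (hb : 0 ≤ b) : b ∈ her b :=
  mem_her_of_tendsto hb (tendsto_fEps_mul hb) (tendsto_mul_fEps hb)

theorem cfcₙ_mem_her {b : B} (hb : 0 ≤ b) (f : ℝ → ℝ) : cfcₙ f b ∈ her b := by
  have hsa : IsSelfAdjoint b := .of_nonneg hb
  refine cfcₙ_cases (fun x => x ∈ her b) b f ?_ fun hf hf0 ha => ?_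
  · simpa using her_smul 0 (mem_her_self hb)
  · set F : ContinuousMapZero (quasispectrum ℝ b) ℝ := ⟨⟨_, hf.domRestrict⟩, hf0⟩
    clear_value F
    open scoped NonUnitalContinuousFunctionalCalculus in
    induction F using ContinuousMapZero.induction_on_of_compact with
    | zero => simpa using her_smul 0 (mem_her_self hb)
    | id => rw [cfcₙHom_id]; exact mem_her_self hb
    | star_id => rw [map_star, cfcₙHom_id]; exact her_star hb (mem_her_self hb)
    | add f g hf hg => rw [map_add]; exact her_add hf hg
    | mul f g hf hg => rw [map_mul]; exact her_mul hf hg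
    | smul r f hf => rw [map_smul]; exact her_smul r hf
    | frequently f hf =>
      exact Filter.Frequently.mem_of_closed (s := (cfcₙHom ha) ⁻¹' her b) hf
        ((isClosed_her b).preimage (cfcₙHom_continuous ha))

theorem fEps_mem_her {b : B} (hb : 0 ≤ b) (ε : ℝ) : fEps ε b ∈ her b := cfcₙ_mem_her hb _

theorem exists_sqrt {x : B} (hx : 0 ≤ x) : ∃ s : B, 0 ≤ s ∧ star s = s ∧ s * s = x :=
  ⟨CFC.sqrt x, CFC.sqrt_nonneg x, (IsSelfAdjoint.of_nonneg (CFC.sqrt_nonneg x)).star_eq,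
    CFC.sqrt_mul_sqrt_self x hx⟩

theorem conj_one_sub_nonneg {z g : B} (hz : 0 ≤ z) (hg : star g = g) :
    0 ≤ z - g * z - z * g + g * z * g := by
  obtain ⟨s, -, hs, rfl⟩ := exists_sqrt hz
  have := mul_star_self_nonneg (s - g * s)
  simp only [star_sub, star_mul, hs, hg] at this
  convert this using 1
  simp only [mul_sub, sub_mul, mul_assoc]
  abel

theorem conj_one_sub_le {x y g : B} (h : x ≤ y) (hg : star g = g) :
    x - g * x - x * g + g * x * g ≤ y - g * y - y * g + g * y * g := by
  rw [← sub_nonneg]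
  convert conj_one_sub_nonneg (sub_nonneg.2 h) hg using 1
  simp only [mul_sub, sub_mul]
  abel

theorem mem_her_of_le {x y : B} (hx : 0 ≤ x) (hxy : x ≤ y) : x ∈ her y := by
  have hy := hx.trans hxy
  obtain ⟨s, hs0, hs, hsx⟩ := exists_sqrt hx
  have key : Tendsto (fun n : ℕ => fEps (1 / ((n : ℝ) + 1)) y * s) atTop (𝓝 s) := by
    have hlim : Tendsto (fun n : ℕ => y - fEps (1 / ((n : ℝ) + 1)) y * y
        - y * fEps (1 / ((n : ℝ) + 1)) y
        + fEps (1 / ((n : ℝ) + 1)) y * y * fEps (1 / ((n : ℝ) + 1)) y) atTop (𝓝 (y - y - y + y)) :=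
      ((tendsto_const_nhds.sub (tendsto_fEps_mul hy)).sub (tendsto_mul_fEps hy)).add
        (tendsto_conj_fEps_of_mem_her hy (mem_her_self hy))
    have hlim2 := hlim.norm
    rw [show y - y - y + y = 0 by abel, norm_zero] at hlim2
    have h2 : Tendsto (fun n : ℕ => ‖fEps (1 / ((n : ℝ) + 1)) y * s - s‖ ^ 2) atTop (𝓝 0) := by
      refine squeeze_zero (fun _ => by positivity) (fun n => ?_) hlim2
      set g := fEps (1 / ((n : ℝ) + 1)) y
      have hg : star g = g := fEps_star _ _
      have e1 : ‖g * s - s‖ ^ 2 = ‖x - g * x - x * g + g * x * g‖ := by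
        rw [sq, ← CStarRing.norm_self_mul_star]
        congr 1
        rw [← hsx]
        simp only [star_sub, star_mul, hs, hg, mul_sub, sub_mul, mul_assoc]
        abel
      rw [e1]
      exact CStarAlgebra.norm_le_norm_of_nonneg_of_le (conj_one_sub_nonneg hx hg)
        (conj_one_sub_le hxy hg)
    rw [tendsto_iff_norm_sub_tendsto_zero]
    have := h2.sqrt
    simpa using this
  have key2 : Tendsto (fun n : ℕ => fEps (1 / ((n : ℝ) + 1)) y * x) atTop (𝓝 x) := by
    have := key.mul_const s
    simpa [mul_assoc, hsx] using this
  refine mem_her_of_tendsto hy key2 ?_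
  have := key2.star
  simpa [fEps_star, (IsSelfAdjoint.of_nonneg hx).star_eq] using this

open scoped ContinuousMapZero in
/-- Intertwining of the functional calculus. -/
theorem mul_cfcₙ_star_mul (z : B) {f : ℝ → ℝ} (hf : Continuous f) (hf0 : f 0 = 0) :
    z * cfcₙ f (star z * z) = cfcₙ f (z * star z) * z := by
  have h1 : IsSelfAdjoint (star z * z) := .star_mul_self z
  have h2 : IsSelfAdjoint (z * star z) := .mul_star_self z
  set s : Set ℝ := quasispectrum ℝ (star z * z) ∪ quasispectrum ℝ (z * star z) with hs
  have s1 : quasispectrum ℝ (star z * z) ⊆ s := Set.subset_union_left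
  have s2 : quasispectrum ℝ (z * star z) ⊆ s := Set.subset_union_right
  have : Fact ((0 : ℝ) ∈ s) := ⟨s1 (quasispectrum.zero_mem ℝ _)⟩
  have hcs : IsCompact s :=
    (NonUnitalContinuousFunctionalCalculus.isCompact_quasispectrum _).union
    (NonUnitalContinuousFunctionalCalculus.isCompact_quasispectrum _)
  have : CompactSpace s := isCompact_iff_compactSpace.1 hcs
  have main : ∀ F : ContinuousMapZero s ℝ,
      z * cfcₙHomSuperset h1 s1 F = cfcₙHomSuperset h2 s2 F * z := by
    intro F
    induction F using ContinuousMapZero.induction_on_of_compact with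
    | zero => simp [map_zero]
    | id =>
      rw [cfcₙHomSuperset_id h1 s1, cfcₙHomSuperset_id h2 s2, mul_assoc]
    | star_id =>
      rw [map_star, map_star, cfcₙHomSuperset_id h1 s1, cfcₙHomSuperset_id h2 s2, h1.star_eq,
        h2.star_eq, mul_assoc]
    | add f g hf hg => rw [map_add, map_add, mul_add, add_mul, hf, hg]
    | mul f g hf hg =>
      rw [map_mul, map_mul, ← mul_assoc, hf, mul_assoc, hg, mul_assoc]
    | smul r f hf => rw [map_smul, map_smul, mul_smul_comm, smul_mul_assoc, hf]
    | frequently f hf =>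
      refine hf.mem_of_closed (isClosed_eq ?_ ?_)
      · exact continuous_const.mul (cfcₙHomSuperset_continuous h1 s1)
      · exact (cfcₙHomSuperset_continuous h2 s2).mul continuous_const
  have := main ⟨⟨fun x : s => f x, by fun_prop⟩, hf0⟩
  rw [cfcₙ_apply f _ hf.continuousOn hf0 h1, cfcₙ_apply f _ hf.continuousOn hf0 h2]
  exact this

theorem exists_swap_cfc (z : B) {f : ℝ → ℝ} {δ : ℝ} (hδ : 0 < δ) (hf : Continuous f)
    (hf0 : ∀ s, 0 ≤ f s) (hfδ : ∀ s ≤ δ, f s = 0) :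
    ∃ x : B, star x * x = cfcₙ f (star z * z) ∧ x * star x = cfcₙ f (z * star z) := by
  have hpos : ∀ s : ℝ, max s δ ≠ 0 := fun s =>
    (lt_of_lt_of_le hδ (le_max_right _ _)).ne'
  have hq : Continuous fun s : ℝ => f s / max s δ := hf.div (by fun_prop) hpos
  set k : ℝ → ℝ := fun s => √(f s / max s δ) with hk
  have hkc : Continuous k := by fun_prop
  have hk0 : k 0 = 0 := by simp [hk, hfδ 0 hδ.le]
  have hkk : ∀ s, k s * k s * s = f s := by
    intro s
    have : 0 ≤ f s / max s δ := div_nonneg (hf0 s) (hδ.le.trans (le_max_right _ _))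
    rw [hk]; simp only
    rw [Real.mul_self_sqrt this]
    rcases le_total s δ with h | h
    · simp [hfδ s h]
    · rw [max_eq_left h]; field_simp [show s ≠ 0 by linarith]
  have h1 : IsSelfAdjoint (star z * z) := .star_mul_self z
  have h2 : IsSelfAdjoint (z * star z) := .mul_star_self z
  have sk : ∀ a : B, star (cfcₙ k a) = cfcₙ k a := fun a => (IsSelfAdjoint.cfcₙ).star_eq
  have comb : ∀ a : B, IsSelfAdjoint a → cfcₙ k a * cfcₙ k a * a = cfcₙ f a := by
    intro a ha
    conv_lhs => enter [2]; rw [← cfcₙ_id' ℝ a]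
    rw [← cfcₙ_mul k k a hkc.continuousOn hk0 hkc.continuousOn hk0,
      ← cfcₙ_mul (fun s => k s * k s) (fun s => s) a (by fun_prop) (by simp [hk0]) (by fun_prop) rfl]
    exact cfcₙ_congr fun s _ => hkk s
  refine ⟨z * cfcₙ k (star z * z), ?_, ?_⟩
  · rw [star_mul, sk, ← comb _ h1]
    have hc : Commute (cfcₙ k (star z * z)) (star z * z) :=
      h1.commute_cfcₙ (Commute.refl _) k
    calc cfcₙ k (star z * z) * star z * (z * cfcₙ k (star z * z))
        = cfcₙ k (star z * z) * ((star z * z) * cfcₙ k (star z * z)) := by simp only [mul_assoc]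
      _ = _ := by rw [← hc.eq, mul_assoc]
  · rw [mul_cfcₙ_star_mul z hkc hk0, star_mul, sk, ← comb _ h2]
    have hc : Commute (cfcₙ k (z * star z)) (z * star z) :=
      h2.commute_cfcₙ (Commute.refl _) k
    calc cfcₙ k (z * star z) * z * (star z * cfcₙ k (z * star z))
        = cfcₙ k (z * star z) * ((z * star z) * cfcₙ k (z * star z)) := by simp only [mul_assoc]
      _ = _ := by rw [← hc.eq, mul_assoc]

/-- An element with a local unit lies in the Pedersen ideal. -/
theorem mem_pedersen_of_mul_eq {g f : B} (h : g * f = f) : f ∈ pedersen B := by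
  unfold pedersen pedersenIn
  simp only [Set.mem_ofPred_eq, Set.mem_iInter]
  rintro I ⟨⟨-, h0, hadd, hneg, hmul⟩, hd⟩
  obtain ⟨y, hyI, hy⟩ := Metric.mem_closure_iff.1 (hd (Set.mem_univ g)) 1 one_pos
  rw [dist_eq_norm] at hy
  have hu : IsUnit (1 - ((g - y : B) : Unitization ℂ B)) := by
    apply isUnit_one_sub_of_norm_lt_one
    rwa [Unitization.norm_inr]
  obtain ⟨u, hu⟩ := hu
  set v : Unitization ℂ B := ↑u⁻¹ with hv
  have e1 : (1 - ((g - y : B) : Unitization ℂ B)) * (f : Unitization ℂ B)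
      = ((y * f : B) : Unitization ℂ B) := by
    rw [sub_mul, one_mul, ← Unitization.inr_mul, sub_mul, h, ← Unitization.inr_sub]
    simp
  have e2 : (f : Unitization ℂ B) = v * ((y * f : B) : Unitization ℂ B) := by
    rw [← e1, ← hu, hv, ← mul_assoc, Units.inv_mul, one_mul]
  have e4 : v.toProd.1 = 1 := by
    have := congrArg (fun w => w.toProd.1) (Units.inv_mul u)
    rw [hu] at this
    have h3 : (1 - ((g - y : B) : Unitization ℂ B)).toProd.1 = 1 := by
      exact sub_zero (1 : ℂ)
    simpa [h3, -Unitization.inr_sub] using this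
  have e3 := congrArg (fun w => w.toProd.2) e2
  simp [e4] at e3
  rw [e3]
  exact hadd _ (hmul y hyI f trivial).1 _ (hmul _ (hmul y hyI f trivial).1 _ trivial).2

theorem pedersen_mul_right {x : B} (hx : x ∈ pedersen B) (y : B) :
    x * y ∈ pedersen B ∧ y * x ∈ pedersen B := by
  unfold pedersen pedersenIn at *
  simp only [Set.mem_ofPred_eq, Set.mem_iInter] at *
  exact ⟨fun I hI => (hI.1.2.2.2.2 x (hx I hI) y trivial).1,
    fun I hI => (hI.1.2.2.2.2 x (hx I hI) y trivial).2⟩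

/-- Functions vanishing near zero land in the Pedersen ideal. -/
theorem cfcₙ_mem_pedersen {a : B} (ha : 0 ≤ a) {f : ℝ → ℝ} {δ : ℝ} (hδ : 0 < δ)
    (hf : Continuous f) (hfδ : ∀ s ≤ δ, f s = 0) : cfcₙ f a ∈ pedersen B := by
  refine mem_pedersen_of_mul_eq (g := fEps δ a) ?_
  unfold fEps
  rw [← cfcₙ_mul (cutoff δ) f a (by fun_prop) (cutoff_zero _) hf.continuousOn (hfδ 0 hδ.le)]
  refine cfcₙ_congr fun s _ => ?_
  rcases le_total s δ with h | h
  · simp [hfδ s h]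
  · simp [cutoff_eq_one hδ h]

theorem fEps_mem_pedersen {a : B} (ha : 0 ≤ a) {ε : ℝ} (hε : 0 < ε) : fEps ε a ∈ pedersen B :=
  cfcₙ_mem_pedersen ha (half_pos hε) (continuous_cutoff ε) fun _ h => cutoff_eq_zero hε h

theorem fEps_ne_zero {a : B} (ha : 0 ≤ a) (h0 : a ≠ 0) :
    ∃ ε > 0, fEps (2 * ε) a ≠ 0 := by
  by_contra! h
  have hlim := tendsto_fEps_mul ha
  have : ∀ n : ℕ, fEps (1 / ((n : ℝ) + 1)) a * a = 0 := by
    intro n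
    have := h (1 / ((n : ℝ) + 1) / 2) (by positivity)
    rw [show 2 * (1 / ((n : ℝ) + 1) / 2) = 1 / ((n : ℝ) + 1) by ring] at this
    rw [this, zero_mul]
  simp only [this] at hlim
  exact h0 (tendsto_nhds_unique hlim tendsto_const_nhds)

end Basics

/-! Part 2 -/

section Dim
variable {B : Type*} [NonUnitalCStarAlgebra B] [PartialOrder B] [StarOrderedRing B]

/-- Additivity on commuting positive elements. -/
def CommAdd (t : B → ℝ≥0∞) : Prop :=
  ∀ a b : B, 0 ≤ a → 0 ≤ b → a * b = b * a → t (a + b) = t a + t b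

theorem QuasiTrace.commAdd (τ : QuasiTrace B) : CommAdd τ.toFun := τ.map_add_of_commute

theorem CommAdd.le {t : B → ℝ≥0∞} (h : CommAdd t) {a b : B} (ha : 0 ≤ a) (hab : a ≤ b)
    (hc : a * b = b * a) : t a ≤ t b := by
  have := h a (b - a) ha (sub_nonneg.2 hab) (by rw [mul_sub, sub_mul, hc])
  rw [add_sub_cancel] at this
  rw [this]; exact le_self_add

theorem cfcₙ_commute' (f g : ℝ → ℝ) (a : B) : cfcₙ f a * cfcₙ g a = cfcₙ g a * cfcₙ f a :=
  cfcₙ_commute_cfcₙ f g a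

theorem CommAdd.cfc_mono {t : B → ℝ≥0∞} (h : CommAdd t) {a : B} (ha : 0 ≤ a) {f g : ℝ → ℝ}
    (hf : Continuous f) (hg : Continuous g) (hf0 : f 0 = 0) (hg0 : g 0 = 0)
    (h0 : ∀ s, 0 ≤ s → 0 ≤ f s) (hfg : ∀ s, 0 ≤ s → f s ≤ g s) :
    t (cfcₙ f a) ≤ t (cfcₙ g a) :=
  h.le (cfcₙ_nonneg fun x hx => h0 x (qs_nonneg ha hx))
    (cfcₙ_mono (fun x hx => hfg x (qs_nonneg ha hx)) hf.continuousOn hg.continuousOn hf0 hg0)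
    (cfcₙ_commute' _ _ _)

theorem CommAdd.cfc_add {t : B → ℝ≥0∞} (h : CommAdd t) {a : B} (ha : 0 ≤ a) {f g k : ℝ → ℝ}
    (hf : Continuous f) (hg : Continuous g) (hf0 : f 0 = 0) (hg0 : g 0 = 0)
    (h0 : ∀ s, 0 ≤ s → 0 ≤ f s) (h1 : ∀ s, 0 ≤ s → 0 ≤ g s)
    (hk : ∀ s, 0 ≤ s → k s = f s + g s) :
    t (cfcₙ k a) = t (cfcₙ f a) + t (cfcₙ g a) := by
  rw [← h _ _ (cfcₙ_nonneg fun x hx => h0 x (qs_nonneg ha hx))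
    (cfcₙ_nonneg fun x hx => h1 x (qs_nonneg ha hx)) (cfcₙ_commute' _ _ _),
    ← cfcₙ_add f g a hf.continuousOn hf0 hg.continuousOn hg0]
  exact congrArg t (cfcₙ_congr fun x hx => hk x (qs_nonneg ha hx))

theorem fEps_mul_fEps {δ ε : ℝ} (hδ : 0 < δ) (hε : δ ≤ ε / 2) (a : B) (ha : 0 ≤ a) :
    fEps δ a * fEps ε a = fEps ε a := by
  unfold fEps
  rw [← cfcₙ_mul _ _ a (by fun_prop) (cutoff_zero _) (by fun_prop) (cutoff_zero _)]
  refine cfcₙ_congr fun s _ => ?_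
  rcases le_total s (ε / 2) with h | h
  · rw [cutoff_eq_zero (by linarith) h, mul_zero]
  · rw [cutoff_eq_one hδ (hε.trans h), one_mul]

theorem fEps_mul_fEps' {δ ε : ℝ} (hδ : 0 < δ) (hε : δ ≤ ε / 2) (a : B) (ha : 0 ≤ a) :
    fEps ε a * fEps δ a = fEps ε a := by
  have := congrArg star (fEps_mul_fEps hδ hε a ha)
  simpa [fEps_star] using this

theorem fEps_sq_le {δ ε : ℝ} (hδ : 0 < δ) (hε : δ ≤ ε / 2) (a : B) (ha : 0 ≤ a) :
    fEps ε a * fEps ε a ≤ fEps δ a := by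
  unfold fEps
  rw [← cfcₙ_mul _ _ a (by fun_prop) (cutoff_zero _) (by fun_prop) (cutoff_zero _)]
  refine cfcₙ_mono (fun s _ => ?_) (by fun_prop) (by fun_prop) (by simp [cutoff_zero])
    (cutoff_zero _)
  rcases le_total s (ε / 2) with h | h
  · rw [cutoff_eq_zero (by linarith) h, mul_zero]; exact cutoff_nonneg _ _
  · rw [cutoff_eq_one hδ (hε.trans h)]
    exact mul_le_one₀ (cutoff_le_one _ _) (cutoff_nonneg _ _) (cutoff_le_one _ _)

theorem conj_le_norm {g y : B} (hg : star g = g) (hy : 0 ≤ y) : g * y * g ≤ ‖y‖ • (g * g) := by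
  have := CStarAlgebra.star_left_conjugate_le_norm_smul (a := g) (b := y) (.of_nonneg hy)
  rwa [hg] at this

theorem conj_nonneg' {g y : B} (hg : star g = g) (hy : 0 ≤ y) : 0 ≤ g * y * g := by
  have := star_left_conjugate_nonneg hy g
  rwa [hg] at this

theorem smul_le_of_le_one {r : ℝ} (hr : r ≤ 1) {x : B} (hx : 0 ≤ x) : r • x ≤ x := by
  have : 0 ≤ (1 - r) • x := smul_nonneg (by linarith) hx
  rw [sub_smul, one_smul] at this
  exact sub_nonneg.1 this

theorem lsc_le {τ : QuasiTrace B} {y : B} (hy : 0 ≤ y) {u : ℕ → B} (hu : ∀ n, 0 ≤ u n)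
    (hlim : Tendsto u atTop (𝓝 y)) {C : ℝ≥0∞} (hC : ∀ n, τ.toFun (u n) ≤ C) : τ.toFun y ≤ C := by
  refine le_of_forall_lt fun c hc => ?_
  have h1 := τ.lowerSemicontinuousOn y hy c hc
  have h2 : Tendsto u atTop (𝓝[{a : B | 0 ≤ a}] y) :=
    tendsto_nhdsWithin_iff.2 ⟨hlim, Eventually.of_forall hu⟩
  obtain ⟨n, hn⟩ := (h2.eventually h1).exists
  exact hn.trans_le (hC n)

theorem tau_le_dTau (τ : QuasiTrace B) {a y : B} (ha : 0 ≤ a) (hy0 : 0 ≤ y) (hy : y ∈ her a)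
    (hy1 : ‖y‖ ≤ 1) : τ.toFun y ≤ dTau τ a := by
  refine lsc_le hy0 (fun n => conj_nonneg' (fEps_star _ _) hy0) (tendsto_conj_fEps_of_mem_her ha hy)
    fun n => ?_
  set g := fEps (1 / ((n : ℝ) + 1)) a with hg
  set e := fEps (1 / (((2 * n + 1 : ℕ) : ℝ) + 1)) a with he
  have hδ := one_div_pos' (2 * n + 1)
  have hε : 1 / (((2 * n + 1 : ℕ) : ℝ) + 1) ≤ 1 / ((n : ℝ) + 1) / 2 := by
    apply le_of_eq; push_cast; field_simp; ring
  have h1 : e * g = g := fEps_mul_fEps hδ hε a ha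
  have h2 : g * e = g := fEps_mul_fEps' hδ hε a ha
  have h3 : g * y * g ≤ e :=
    (conj_le_norm (fEps_star _ _) hy0).trans
      ((smul_le_of_le_one hy1 (by
        have h5 := star_mul_self_nonneg g
        rwa [hg, fEps_star, ← hg] at h5)).trans (fEps_sq_le hδ hε a ha))
  have h4 : τ.toFun (g * y * g) ≤ τ.toFun e :=
    τ.commAdd.le (conj_nonneg' (fEps_star _ _) hy0) h3 (by
      rw [mul_assoc, h2, ← mul_assoc, ← mul_assoc, h1])
  exact h4.trans (le_iSup (fun n : ℕ => τ.toFun (fEps (1 / ((n : ℝ) + 1)) a)) _)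

theorem tau_smul (τ : QuasiTrace B) {r : ℝ} (hr : 0 ≤ r) {y : B} (hy : 0 ≤ y) :
    τ.toFun (r • y) = ENNReal.ofReal r * τ.toFun y := by
  rcases hr.eq_or_lt with rfl | h
  · simp [τ.map_zero]
  · exact τ.map_smul r y h hy

theorem tau_le_norm_dTau (τ : QuasiTrace B) {a y : B} (ha : 0 ≤ a) (hy0 : 0 ≤ y) (hy : y ∈ her a)
    {r : ℝ} (hr : ‖y‖ ≤ r) : τ.toFun y ≤ ENNReal.ofReal r * dTau τ a := by
  rcases eq_or_ne y 0 with rfl | h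
  · simp [τ.map_zero]
  have hr0 : 0 < r := (norm_pos_iff.2 h).trans_le hr
  have e : y = r • (r⁻¹ • y) := by rw [smul_smul, mul_inv_cancel₀ hr0.ne', one_smul]
  have hp : 0 ≤ r⁻¹ • y := smul_nonneg (by positivity) hy0
  rw [e, tau_smul τ hr0.le hp]
  gcongr
  refine tau_le_dTau τ ha hp (her_smul _ hy) ?_
  rw [norm_smul, norm_inv, Real.norm_of_nonneg hr0.le, inv_mul_le_iff₀ hr0]; simpa using hr

theorem tau_fEps_le_dTau (τ : QuasiTrace B) {a : B} (ha : 0 ≤ a) (ε : ℝ) :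
    τ.toFun (fEps ε a) ≤ dTau τ a :=
  tau_le_dTau τ ha (fEps_nonneg _ _) (fEps_mem_her ha _) (fEps_norm_le _ _)

theorem dTau_le_of_mem_her (τ : QuasiTrace B) {x a : B} (ha : 0 ≤ a) (hx : 0 ≤ x)
    (h : x ∈ her a) : dTau τ x ≤ dTau τ a :=
  iSup_le fun n => tau_le_dTau τ ha (fEps_nonneg _ _) (her_subset h (fEps_mem_her hx _))
    (fEps_norm_le _ _)

theorem dTau_le_of_le (τ : QuasiTrace B) {x a : B} (hx : 0 ≤ x) (h : x ≤ a) :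
    dTau τ x ≤ dTau τ a :=
  dTau_le_of_mem_her τ (hx.trans h) hx (mem_her_of_le hx h)

theorem dTau_smul_le (τ : QuasiTrace B) {x : B} {r : ℝ} (hr : 0 ≤ r) (hx : 0 ≤ x) :
    dTau τ (r • x) ≤ dTau τ x :=
  dTau_le_of_mem_her τ hx (smul_nonneg hr hx) (her_smul r (mem_her_self hx))

theorem dTau_smul (τ : QuasiTrace B) {x : B} {r : ℝ} (hr : 0 < r) (hx : 0 ≤ x) :
    dTau τ (r • x) = dTau τ x := by
  refine le_antisymm (dTau_smul_le τ hr.le hx) ?_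
  have := dTau_smul_le τ (inv_nonneg.2 hr.le) (smul_nonneg hr.le hx)
  rwa [smul_smul, inv_mul_cancel₀ hr.ne', one_smul] at this

theorem dTau_swap_le (τ : QuasiTrace B) (z : B) : dTau τ (star z * z) ≤ dTau τ (z * star z) := by
  refine iSup_le fun n => ?_
  obtain ⟨x, h1, h2⟩ := exists_swap_cfc z (half_pos (one_div_pos' n)) (continuous_cutoff _)
    (cutoff_nonneg _) (fun _ h => cutoff_eq_zero (one_div_pos' n) h)
  have h3 : τ.toFun (fEps (1 / ((n : ℝ) + 1)) (star z * z))
      = τ.toFun (fEps (1 / ((n : ℝ) + 1)) (z * star z)) := by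
    unfold fEps
    rw [← h1, ← h2, τ.map_star_mul_self]
  rw [h3]
  exact le_iSup (fun n : ℕ => τ.toFun (fEps (1 / ((n : ℝ) + 1)) (z * star z))) n

theorem dTau_swap (τ : QuasiTrace B) (z : B) : dTau τ (star z * z) = dTau τ (z * star z) :=
  le_antisymm (dTau_swap_le τ z) (by simpa using dTau_swap_le τ (star z))

theorem star_conj_eq {p w : B} (hp : 0 ≤ p) : ∃ k : B, star k = k ∧ k * k = p ∧
    star (k * w) * (k * w) = star w * p * w ∧ (k * w) * star (k * w) = k * (w * star w) * k ∧
    k * (w * star w) * k ≤ ‖w * star w‖ • p := by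
  obtain ⟨k, -, hk, hkk⟩ := exists_sqrt hp
  refine ⟨k, hk, hkk, ?_, ?_, ?_⟩
  · rw [star_mul, hk, ← hkk]; simp only [mul_assoc]
  · rw [star_mul, hk]; simp only [mul_assoc]
  · rw [← hkk]; exact conj_le_norm hk (mul_star_self_nonneg w)

theorem dTau_conj_le (τ : QuasiTrace B) {p : B} (w : B) (hp : 0 ≤ p) :
    dTau τ (star w * p * w) ≤ dTau τ p := by
  obtain ⟨k, hk, hkk, h1, h2, h3⟩ := star_conj_eq (w := w) hp
  rw [← h1, dTau_swap, h2]
  exact (dTau_le_of_le τ (conj_nonneg' hk (mul_star_self_nonneg w)) h3).trans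
    (dTau_smul_le τ (norm_nonneg _) hp)

open scoped ContinuousMapZero in
theorem cfcₙ_add_orth {b c : B} (hb : 0 ≤ b) (hc : 0 ≤ c) (hbc : b * c = 0) {f : ℝ → ℝ}
    (hf : Continuous f) (hf0 : f 0 = 0) : cfcₙ f (b + c) = cfcₙ f b + cfcₙ f c := by
  have hb' : IsSelfAdjoint b := .of_nonneg hb
  have hc' : IsSelfAdjoint c := .of_nonneg hc
  have ha : IsSelfAdjoint (b + c) := hb'.add hc'
  set s := quasispectrum ℝ (b + c) ∪ quasispectrum ℝ b ∪ quasispectrum ℝ c with hsdef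
  have hs : CompactSpace s := by
    refine isCompact_iff_compactSpace.mp <| (IsCompact.union ?_ ?_).union ?_
    all_goals exact NonUnitalContinuousFunctionalCalculus.isCompact_quasispectrum _
  obtain ⟨has, hbs, hcs⟩ : quasispectrum ℝ (b + c) ⊆ s ∧ quasispectrum ℝ b ⊆ s ∧
    quasispectrum ℝ c ⊆ s := by grind
  have : Fact (0 ∈ s) := ⟨hbs (quasispectrum.zero_mem ℝ _)⟩
  have mul₁ (f g : ContinuousMapZero s ℝ) :
      (cfcₙHomSuperset hb' hbs f) * (cfcₙHomSuperset hc' hcs g) = 0 := by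
    refine f.nonUnitalStarAlgHom_apply_mul_eq_zero _ _ ?id ?star_id
      (cfcₙHomSuperset_continuous hb' hbs)
    case' star_id => rw [star_trivial]
    all_goals
      refine g.mul_nonUnitalStarAlgHom_apply_eq_zero _ _ ?_ ?_
        (cfcₙHomSuperset_continuous hc' hcs)
      all_goals simp only [star_trivial, cfcₙHomSuperset_id hb' hbs,
        cfcₙHomSuperset_id hc' hcs, hbc]
  have mul₂ (f g : ContinuousMapZero s ℝ) :
      (cfcₙHomSuperset hc' hcs f) * (cfcₙHomSuperset hb' hbs g) = 0 := by
    simpa only [star_mul, star_zero, ← map_star, star_trivial] using congrArg star (mul₁ g f)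
  have main : ∀ F : ContinuousMapZero s ℝ,
      cfcₙHomSuperset ha has F = cfcₙHomSuperset hb' hbs F + cfcₙHomSuperset hc' hcs F := by
    intro F
    induction F using ContinuousMapZero.induction_on_of_compact with
    | zero => simp [map_zero]
    | id =>
      rw [cfcₙHomSuperset_id ha has, cfcₙHomSuperset_id hb' hbs, cfcₙHomSuperset_id hc' hcs]
    | star_id =>
      rw [star_trivial,
        cfcₙHomSuperset_id ha has, cfcₙHomSuperset_id hb' hbs, cfcₙHomSuperset_id hc' hcs]
    | add f g hf hg => rw [map_add, map_add, map_add, hf, hg]; abel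
    | mul f g hf hg =>
      rw [map_mul, map_mul, map_mul, hf, hg, add_mul, mul_add, mul_add, mul₁, mul₂]; abel
    | smul r f hf => rw [map_smul, map_smul, map_smul, hf, smul_add]
    | frequently f hf =>
      refine hf.mem_of_closed (isClosed_eq ?_ ?_)
      · exact cfcₙHomSuperset_continuous ha has
      · exact (cfcₙHomSuperset_continuous hb' hbs).add (cfcₙHomSuperset_continuous hc' hcs)
  have := main ⟨⟨fun x : s => f x, by fun_prop⟩, hf0⟩
  rw [cfcₙ_apply f _ hf.continuousOn hf0 ha, cfcₙ_apply f _ hf.continuousOn hf0 hb',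
    cfcₙ_apply f _ hf.continuousOn hf0 hc']
  exact this

theorem cutoff_anti {δ ε t : ℝ} (hδ : 0 < δ) (h : δ ≤ ε) (ht : 0 ≤ t) :
    cutoff ε t ≤ cutoff δ t := by
  unfold cutoff
  gcongr

theorem tau_fEps_mono (τ : QuasiTrace B) {a : B} (ha : 0 ≤ a) :
    Monotone fun n : ℕ => τ.toFun (fEps (1 / ((n : ℝ) + 1)) a) := by
  intro m n h
  refine τ.commAdd.cfc_mono ha (continuous_cutoff _) (continuous_cutoff _) (cutoff_zero _)
    (cutoff_zero _) (fun s _ => cutoff_nonneg _ s) fun s hs => cutoff_anti (one_div_pos' n) ?_ hs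
  gcongr

theorem dTau_add_orth (τ : QuasiTrace B) {b c : B} (hb : 0 ≤ b) (hc : 0 ≤ c) (hbc : b * c = 0) :
    dTau τ (b + c) = dTau τ b + dTau τ c := by
  unfold dTau
  rw [ENNReal.iSup_add_iSup_of_monotone (tau_fEps_mono τ hb) (tau_fEps_mono τ hc)]
  refine iSup_congr fun n => ?_
  unfold fEps
  rw [cfcₙ_add_orth hb hc hbc (continuous_cutoff _) (cutoff_zero _)]
  have hcb : c * b = 0 := by
    have := congrArg star hbc
    simpa [(IsSelfAdjoint.of_nonneg hb).star_eq, (IsSelfAdjoint.of_nonneg hc).star_eq] using this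
  have h1 : ∀ {b c : B}, 0 ≤ b → 0 ≤ c → b * c = 0 → ∀ ε, fEps ε b * fEps ε c = 0 :=
    fun {b c} hb hc h ε =>
    mul_eq_zero_of_mem_her (fEps_mem_her hb ε) (mul_eq_zero_of_mem_her' (fEps_mem_her hc ε) h)
  exact τ.commAdd _ _ (fEps_nonneg _ _) (fEps_nonneg _ _)
    ((h1 hb hc hbc _).trans (h1 hc hb hcb _).symm)

theorem dTau_add_le_of_mem_her (τ : QuasiTrace B) {a b c : B} (ha : 0 ≤ a) (hb : 0 ≤ b)
    (hc : 0 ≤ c) (hbc : b * c = 0) (h1 : b ∈ her a) (h2 : c ∈ her a) :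
    dTau τ b + dTau τ c ≤ dTau τ a := by
  rw [← dTau_add_orth τ hb hc hbc]
  exact dTau_le_of_mem_her τ ha (add_nonneg hb hc) (her_add h1 h2)

end Dim

/-! Part 3 -/

section Mono
variable {B : Type*} [NonUnitalCStarAlgebra B] [PartialOrder B] [StarOrderedRing B]

/-- `(a - s)_+`. -/
def pp (s : ℝ) (a : B) : B := cfcₙ (fun t : ℝ => max (t - s) 0) a

theorem pp_nonneg (s : ℝ) (a : B) : 0 ≤ pp s a := cfcₙ_nonneg fun _ _ => le_max_right _ _

theorem pp_zero {a : B} (ha : 0 ≤ a) : pp 0 a = a := by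
  unfold pp
  conv_rhs => rw [← cfcₙ_id' ℝ a]
  exact cfcₙ_congr fun x hx => by
    have := qs_nonneg ha hx
    simp [this]

theorem pp_of_neg (s : ℝ) {a : B} (ha : 0 ≤ a) : pp 0 a = a := pp_zero ha

theorem qs_le_norm {a : B} (ha : 0 ≤ a) {x : ℝ} (hx : x ∈ quasispectrum ℝ a) : x ≤ ‖a‖ := by
  have h1 := norm_apply_le_norm_cfcₙ (fun t : ℝ => t) a hx
  rw [cfcₙ_id' ℝ a, Real.norm_of_nonneg (qs_nonneg ha hx)] at h1
  exact h1

theorem pp_eq_zero {a : B} (ha : 0 ≤ a) {s : ℝ} (h : ‖a‖ ≤ s) : pp s a = 0 := by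
  unfold pp
  rw [← cfcₙ_const_zero ℝ a]
  exact cfcₙ_congr fun x hx => by
    have := qs_le_norm ha hx
    exact max_eq_right (by linarith)

theorem pp_cont (s : ℝ) : Continuous fun t : ℝ => max (t - s) 0 := by fun_prop

theorem pp_fun_zero {s : ℝ} (hs : 0 ≤ s) : (fun t : ℝ => max (t - s) 0) 0 = 0 := by
  simp [hs]

theorem norm_sub_pp_le {a : B} (ha : 0 ≤ a) {s : ℝ} (hs : 0 ≤ s) : ‖a - pp s a‖ ≤ s := by
  have : a - pp s a = cfcₙ (fun t => t - max (t - s) 0) a := by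
    unfold pp
    rw [cfcₙ_sub (fun t : ℝ => t) (fun t => max (t - s) 0) a (by fun_prop) rfl (by fun_prop) (pp_fun_zero hs), cfcₙ_id' ℝ a]
  rw [this]
  refine norm_cfcₙ_le fun x hx => ?_
  have := qs_nonneg ha hx
  rw [Real.norm_eq_abs, abs_le]
  rcases max_cases (x - s) 0 with h | h <;> constructor <;> linarith

theorem pp_mem_her {a : B} (ha : 0 ≤ a) (s : ℝ) : pp s a ∈ her a := cfcₙ_mem_her ha _

theorem pp_mem_pedersen {a : B} (ha : 0 ≤ a) {s : ℝ} (hs : 0 < s) : pp s a ∈ pedersen B :=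
  cfcₙ_mem_pedersen ha hs (pp_cont s) fun t ht => max_eq_right (by linarith)

theorem pp_le {a : B} (ha : 0 ≤ a) {s : ℝ} (hs : 0 ≤ s) : pp s a ≤ a := by
  conv_rhs => rw [← cfcₙ_id' ℝ a]
  refine cfcₙ_mono (fun x hx => ?_) (by fun_prop) (by fun_prop) (pp_fun_zero hs) rfl
  have := qs_nonneg ha hx
  exact max_le (by linarith) this

theorem tendsto_pp {a : B} (ha : 0 ≤ a) {u : ℕ → ℝ} (hu : ∀ n, 0 ≤ u n)
    (h : Tendsto u atTop (𝓝 0)) : Tendsto (fun n => pp (u n) a) atTop (𝓝 a) := by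
  rw [tendsto_iff_norm_sub_tendsto_zero]
  refine squeeze_zero (fun _ => norm_nonneg _) (fun n => ?_) h
  rw [norm_sub_rev]; exact norm_sub_pp_le ha (hu n)

/-- `(x - s')_+` as a compression. -/
theorem exists_pp_factor {s s' : ℝ} (hs : 0 ≤ s) (h : s < s') (x : B) (hx : 0 ≤ x) :
    ∃ e : B, star e = e ∧ ‖e‖ ≤ 1 ∧ pp s' x = e * x * e - s • (e * e) := by
  have hpos : ∀ t : ℝ, 0 < max (t - s) (s' - s) := fun t =>
    lt_of_lt_of_le (by linarith) (le_max_right _ _)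
  set g : ℝ → ℝ := fun t => √(max (t - s') 0 / max (t - s) (s' - s)) with hg
  have hgc : Continuous g := by
    apply Continuous.sqrt
    exact Continuous.div (by fun_prop) (by fun_prop) fun t => (hpos t).ne'
  have hg0 : g 0 = 0 := by
    simp [hg, max_eq_right (show (-s' : ℝ) ≤ 0 by linarith)]
  have hgg : ∀ t, g t * t * g t - s * (g t * g t) = max (t - s') 0 := by
    intro t
    have e1 : g t * g t = max (t - s') 0 / max (t - s) (s' - s) :=
      Real.mul_self_sqrt (div_nonneg (le_max_right _ _) (hpos t).le)
    have : g t * t * g t - s * (g t * g t) = g t * g t * (t - s) := by ring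
    rw [this, e1]
    rcases le_total t s' with h' | h'
    · simp [max_eq_right (show t - s' ≤ 0 by linarith)]
    · rw [max_eq_left (show s' - s ≤ t - s by linarith)]
      field_simp [show t - s ≠ 0 by linarith]
  have h2 : IsSelfAdjoint x := .of_nonneg hx
  refine ⟨cfcₙ g x, (IsSelfAdjoint.cfcₙ).star_eq, norm_cfcₙ_le fun t ht => ?_, ?_⟩
  · rw [Real.norm_of_nonneg (Real.sqrt_nonneg _), Real.sqrt_le_iff, one_pow, div_le_one (hpos t)]
    refine ⟨zero_le_one, ?_⟩
    apply max_le_max <;> linarith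
  · conv_rhs => enter [1, 1, 2]; rw [← cfcₙ_id' ℝ x]
    rw [← cfcₙ_mul _ _ x hgc.continuousOn hg0 (by fun_prop) rfl,
      ← cfcₙ_mul _ _ x (by fun_prop) (by simp [hg0]) hgc.continuousOn hg0,
      ← cfcₙ_mul _ _ x hgc.continuousOn hg0 hgc.continuousOn hg0,
      ← cfcₙ_smul s _ x (by fun_prop) (by simp [hg0]),
      ← cfcₙ_sub _ _ x (by fun_prop) (by simp [hg0]) (by fun_prop) (by simp [hg0])]
    exact cfcₙ_congr fun t _ => (hgg t).symm

theorem conj_le_conj' {e x y : B} (he : star e = e) (h : x ≤ y) : e * x * e ≤ e * y * e := by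
  have := star_left_conjugate_le_conjugate h e
  rwa [he] at this

theorem conj_sub_le_pp {s : ℝ} (hs : 0 ≤ s) {e y : B} (he : star e = e) (hy : 0 ≤ y) :
    e * y * e - s • (e * e) ≤ e * pp s y * e := by
  have h1 : y = pp s y + cfcₙ (fun t => min t s) y := by
    unfold pp
    rw [← cfcₙ_add (fun t : ℝ => max (t - s) 0) (fun t => min t s) y (by fun_prop) (pp_fun_zero hs) (by fun_prop) (by simp [hs])]
    conv_lhs => rw [← cfcₙ_id' ℝ y]
    refine cfcₙ_congr fun t _ => ?_
    rcases le_total t s with h | h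
    · simp [h]
    · simp [h]
  have h0 : 0 ≤ cfcₙ (fun t => min t s) y := cfcₙ_nonneg fun x hx => le_min (qs_nonneg hy hx) hs
  have h2 : ‖cfcₙ (fun t => min t s) y‖ ≤ s := norm_cfcₙ_le fun x hx => by
    rw [Real.norm_of_nonneg (le_min (qs_nonneg hy hx) hs)]; exact min_le_right _ _
  have h3 : e * cfcₙ (fun t => min t s) y * e ≤ s • (e * e) := by
    refine (conj_le_norm he h0).trans ?_
    have h4 := star_mul_self_nonneg e
    rw [he] at h4
    have : 0 ≤ (s - ‖cfcₙ (fun t => min t s) y‖) • (e * e) := smul_nonneg (by linarith) h4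
    rw [sub_smul] at this
    exact sub_nonneg.1 this
  conv_lhs => rw [h1]
  rw [mul_add, add_mul, add_sub_assoc]
  exact add_le_of_nonpos_right (sub_nonpos.2 h3)

theorem dTau_pp_le (τ : QuasiTrace B) {s s' : ℝ} (hs : 0 ≤ s) (h : s < s') {x y : B} (hx : 0 ≤ x)
    (hxy : x ≤ y) : dTau τ (pp s' x) ≤ dTau τ (pp s y) := by
  obtain ⟨e, he, -, h1⟩ := exists_pp_factor hs h x hx
  have h2 : pp s' x ≤ e * pp s y * e := by
    rw [h1]
    exact (sub_le_sub_right (conj_le_conj' he hxy) _).trans (conj_sub_le_pp hs he (hx.trans hxy))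
  refine (dTau_le_of_le τ (pp_nonneg _ _) h2).trans ?_
  have := dTau_conj_le τ e (pp_nonneg s y)
  rwa [he] at this

theorem tau_mono_aux (τ : QuasiTrace B) {x y : B} (hx : 0 ≤ x) (hxy : x ≤ y) {δ : ℝ} (hδ : 0 < δ)
    (N k : ℕ) (hk : ‖x‖ ≤ (N + 2 : ℝ) * δ) (hkN : k ≤ N) :
    τ.toFun (pp ((k + 2 : ℝ) * δ) x) ≤ τ.toFun (pp ((k : ℝ) * δ) y) := by
  have hy := hx.trans hxy
  induction hkN using Nat.decreasingInduction with
  | self => rw [pp_eq_zero hx hk, τ.map_zero]; exact zero_le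
  | of_succ k hk ih =>
    have split : ∀ {a : B}, 0 ≤ a → ∀ m : ℝ, 0 ≤ m → τ.toFun (pp (m * δ) a) =
        τ.toFun (cfcₙ (fun t => min (max (t - m * δ) 0) δ) a) + τ.toFun (pp ((m + 1) * δ) a) := by
      intro a ha m hm
      have hm' : 0 ≤ m * δ := by positivity
      refine τ.commAdd.cfc_add ha (by fun_prop) (by fun_prop) ?_ (pp_fun_zero (by positivity))
        (fun s _ => le_min (le_max_right _ _) hδ.le) (fun s _ => le_max_right _ _) fun s hs => ?_
      · simp [hm', hδ.le]
      · have : s - (m + 1) * δ = (s - m * δ) - δ := by ring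
        rw [this]
        generalize s - m * δ = u
        rcases le_total u δ with h | h
        · rw [max_eq_right (show u - δ ≤ 0 by linarith), min_eq_left (max_le h hδ.le)]; ring
        · rw [max_eq_left (show 0 ≤ u - δ by linarith), max_eq_left (show 0 ≤ u by linarith),
            min_eq_right h]; ring
    rw [split hx (k + 2) (by positivity), split hy k (by positivity)]
    have e1 : ((k : ℝ) + 2 + 1) = (((k + 1 : ℕ) : ℝ) + 2) := by push_cast; ring
    have e2 : ((k : ℝ) + 1) = ((k + 1 : ℕ) : ℝ) := by push_cast; ring
    rw [e1]
    refine add_le_add ?_ (by rw [e2]; exact ih)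
    -- compare the layers
    have h0 : ∀ m : ℝ, 0 ≤ m → (0 : ℝ) ≤ m * δ := fun m hm => by positivity
    have a1 : τ.toFun (cfcₙ (fun t => min (max (t - (k + 2 : ℝ) * δ) 0) δ) x)
        ≤ ENNReal.ofReal δ * dTau τ (pp ((k + 2 : ℝ) * δ) x) := by
      refine tau_le_norm_dTau τ (pp_nonneg _ _) (cfcₙ_nonneg fun t _ =>
        le_min (le_max_right _ _) hδ.le) ?_ (norm_cfcₙ_le fun t ht => ?_)
      · refine mem_her_of_le (cfcₙ_nonneg fun t _ => le_min (le_max_right _ _) hδ.le) ?_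
        refine cfcₙ_mono (fun t _ => min_le_left _ _) (by fun_prop) (by fun_prop) ?_
          (pp_fun_zero (by positivity))
        simp [h0 (k + 2) (by positivity), hδ.le]
      · rw [Real.norm_of_nonneg (le_min (le_max_right _ _) hδ.le)]
        exact min_le_right _ _
    have a2 : dTau τ (pp ((k + 2 : ℝ) * δ) x) ≤ dTau τ (pp ((k + 1 : ℝ) * δ) y) :=
      dTau_pp_le τ (by positivity) (by nlinarith) hx hxy
    have a3 : ENNReal.ofReal δ * dTau τ (pp ((k + 1 : ℝ) * δ) y)
        ≤ τ.toFun (cfcₙ (fun t => min (max (t - (k : ℝ) * δ) 0) δ) y) := by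
      unfold dTau
      rw [ENNReal.mul_iSup]
      refine iSup_le fun n => ?_
      rw [← tau_smul τ hδ.le (fEps_nonneg _ _)]
      unfold fEps pp
      rw [← cfcₙ_comp' (cutoff (1 / ((n : ℝ) + 1))) (fun t : ℝ => max (t - (k + 1 : ℝ) * δ) 0) y
        (by fun_prop) (cutoff_zero _) (by fun_prop) (pp_fun_zero (by positivity))
        (.of_nonneg hy),
        ← cfcₙ_smul δ _ y (by fun_prop) (by simp [h0 (k + 1) (by positivity), cutoff_zero])]
      refine τ.commAdd.cfc_mono hy (by fun_prop) (by fun_prop)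
        (by simp [h0 (k + 1) (by positivity), cutoff_zero])
        (by simp [h0 k (by positivity), hδ.le])
        (fun s _ => smul_nonneg hδ.le (cutoff_nonneg _ _)) fun s hs => ?_
      rcases le_total s ((k + 1 : ℝ) * δ) with h | h
      · rw [max_eq_right (by linarith), cutoff_zero, smul_zero]
        exact le_min (le_max_right _ _) hδ.le
      · have : δ ≤ s - k * δ := by linarith
        rw [max_eq_left (show (0 : ℝ) ≤ s - k * δ by linarith), min_eq_right this, smul_eq_mul]
        exact mul_le_of_le_one_right hδ.le (cutoff_le_one _ _)
    exact a1.trans ((by gcongr : _ ≤ _).trans a3)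

theorem tau_mono (τ : QuasiTrace B) {x y : B} (hx : 0 ≤ x) (hxy : x ≤ y) :
    τ.toFun x ≤ τ.toFun y := by
  have hy := hx.trans hxy
  have hlim : Tendsto (fun n : ℕ => 2 * (1 / ((n : ℝ) + 1))) atTop (𝓝 0) := by
    simpa using tendsto_one_div'.const_mul 2
  refine lsc_le hx (fun n => pp_nonneg _ _) (tendsto_pp hx (fun n => by positivity) hlim)
    fun n => ?_
  have hδ := one_div_pos' n
  obtain ⟨N, hN⟩ := exists_nat_ge (‖x‖ / (1 / ((n : ℝ) + 1)))
  rw [div_le_iff₀ hδ] at hN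
  have := tau_mono_aux τ hx hxy hδ N 0 (by nlinarith) (Nat.zero_le _)
  simpa [pp_zero hy] using this

/-- Functionals sharing the algebraic properties of quasitraces. -/
structure Good (t : B → ℝ≥0∞) : Prop where
  zero : t 0 = 0
  smul : ∀ (r : ℝ) (a : B), 0 < r → 0 ≤ a → t (r • a) = ENNReal.ofReal r * t a
  add : CommAdd t
  tr : ∀ x : B, t (star x * x) = t (x * star x)
  mono : ∀ x y : B, 0 ≤ x → x ≤ y → t x ≤ t y

theorem QuasiTrace.good (τ : QuasiTrace B) : Good τ.toFun :=
  ⟨τ.map_zero, τ.map_smul, τ.map_add_of_commute, τ.map_star_mul_self,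
    fun _ _ hx hxy => tau_mono τ hx hxy⟩

theorem Good.conj_le {t : B → ℝ≥0∞} (ht : Good t) {e p : B} (he : star e = e) (he1 : ‖e‖ ≤ 1)
    (hp : 0 ≤ p) : t (e * p * e) ≤ t p := by
  obtain ⟨k, hk, hkk, h1, h2, h3⟩ := star_conj_eq (w := e) hp
  have h4 : t (e * p * e) = t (k * (e * star e) * k) := by
    rw [← h2, ← ht.tr, h1, he]
  rw [h4]
  refine ht.mono _ _ (conj_nonneg' hk (mul_star_self_nonneg e)) (h3.trans ?_)
  refine smul_le_of_le_one ?_ hp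
  rw [CStarRing.norm_self_mul_star]
  exact mul_le_one₀ he1 (norm_nonneg _) he1

theorem Good.pp_le_of_norm {t : B → ℝ≥0∞} (ht : Good t) {a a' : B} (ha : 0 ≤ a) (ha' : 0 ≤ a')
    {ε : ℝ} (h : ‖a - a'‖ < ε) : t (pp ε a) ≤ t a' := by
  obtain ⟨e, he, he1, h1⟩ := exists_pp_factor (norm_nonneg (a - a')) h a ha
  have h2 : pp ε a ≤ e * a' * e := by
    rw [h1]
    have hsa : IsSelfAdjoint (a - a') := (IsSelfAdjoint.of_nonneg ha).sub (.of_nonneg ha')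
    have := CStarAlgebra.star_left_conjugate_le_norm_smul (a := e) (b := a - a') hsa
    rw [he, mul_sub, sub_mul] at this
    rw [sub_le_iff_le_add] at this ⊢
    rwa [add_comm]
  exact (ht.mono _ _ (pp_nonneg _ _) h2).trans (ht.conj_le he he1 ha')

end Mono

/-! Part 4 -/

section Stab

/-- Finite matrices over `A`, with rows relabelled by `ι`. -/
def EI (SB : Stabilization A W) (ι : ℕ → ℕ) : ((ℕ × ℕ) →₀ A) →ₗ[ℂ] W :=
  Finsupp.lsum ℂ (fun p : ℕ × ℕ => SB.emb (ι p.1) p.2)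

theorem EI_single (SB : Stabilization A W) (ι : ℕ → ℕ) (p : ℕ × ℕ) (a : A) :
    EI SB ι (Finsupp.single p a) = SB.emb (ι p.1) p.2 a := by
  simp [EI]

theorem EI_dense (SB : Stabilization A W) : DenseRange (EI SB id) := by
  have h : (Submodule.span ℂ {w : W | ∃ (i j : ℕ) (a : A), w = SB.emb i j a} : Set W)
      ⊆ Set.range (EI SB id) := by
    have : Submodule.span ℂ {w : W | ∃ (i j : ℕ) (a : A), w = SB.emb i j a}
        ≤ LinearMap.range (EI SB id) := by
      rw [Submodule.span_le]
      rintro _ ⟨i, j, a, rfl⟩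
      exact ⟨Finsupp.single (i, j) a, EI_single SB id (i, j) a⟩
    exact this
  exact SB.dense_span.mono h

theorem additive_ext (SB : Stabilization A W) {f g : W → W} (hf : Continuous f) (hg : Continuous g)
    (hfa : ∀ x y, f (x + y) = f x + f y) (hga : ∀ x y, g (x + y) = g x + g y)
    (h : ∀ i j a, f (SB.emb i j a) = g (SB.emb i j a)) (x : W) : f x = g x := by
  refine (EI_dense SB).induction_on (p := fun x => f x = g x) x (isClosed_eq hf hg) ?_
  intro p
  have hf0 : f 0 = 0 := by have := hfa 0 0; simpa using this
  have hg0 : g 0 = 0 := by have := hga 0 0; simpa using this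
  induction p using Finsupp.induction_linear with
  | zero => simp [hf0, hg0]
  | add p q hp hq => rw [map_add, hfa, hga, hp, hq]
  | single p a => rw [EI_single]; exact h _ _ _

theorem EI_mul (SB : Stabilization A W) {ι κ : ℕ → ℕ} (h : ∀ i j, ι i = κ j ↔ i = j)
    (f g : (ℕ × ℕ) →₀ A) :
    star (EI SB ι f) * EI SB κ g = star (EI SB id f) * EI SB id g := by
  induction f using Finsupp.induction_linear with
  | zero => simp
  | add p q hp hq => simp only [map_add, star_add, add_mul, hp, hq]
  | single p a =>
    induction g using Finsupp.induction_linear with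
    | zero => simp
    | add p q hp hq => simp only [map_add, mul_add, hp, hq]
    | single q b =>
      simp only [EI_single, SB.emb_star, SB.emb_mul, h, id_eq]

/-- Row relabelling. -/
def sh (s : Fin 2) (i : ℕ) : ℕ := 2 * i + s

theorem sh_eq (s t : Fin 2) (i j : ℕ) : sh s i = sh t j ↔ s = t ∧ i = j := by
  unfold sh
  rw [Fin.ext_iff]
  omega

theorem EI_norm (SB : Stabilization A W) (s : Fin 2) (f : (ℕ × ℕ) →₀ A) :
    ‖EI SB (sh s) f‖ = ‖EI SB id f‖ := by
  have h := EI_mul SB (ι := sh s) (κ := sh s) (fun i j => by simp [sh_eq]) f f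
  have h2 := congrArg norm h
  rw [CStarRing.norm_star_mul_self, CStarRing.norm_star_mul_self] at h2
  exact (mul_self_inj (norm_nonneg _) (norm_nonneg _)).1 h2

/-- The isometries `L_s`. -/
def LL (SB : Stabilization A W) (s : Fin 2) : W →L[ℂ] W := (EI SB (sh s)).extendOfNorm (EI SB id)

theorem LL_EI (SB : Stabilization A W) (s : Fin 2) (f) : LL SB s (EI SB id f) = EI SB (sh s) f :=
  LinearMap.extendOfNorm_eq (EI_dense SB) ⟨1, fun x => by rw [EI_norm, one_mul]⟩ f

theorem LL_emb (SB : Stabilization A W) (s : Fin 2) (i j : ℕ) (a : A) :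
    LL SB s (SB.emb i j a) = SB.emb (sh s i) j a := by
  have := LL_EI SB s (Finsupp.single (i, j) a)
  simpa only [EI_single, id_eq] using this

theorem LL_mul (SB : Stabilization A W) (s : Fin 2) (x y : W) :
    LL SB s (x * y) = LL SB s x * y := by
  revert y
  refine additive_ext SB (by fun_prop) (by fun_prop) (by simp [mul_add]) (by simp [mul_add])
    fun k l b => ?_
  revert x
  refine additive_ext SB (by fun_prop) (by fun_prop) (by simp [add_mul]) (by simp [add_mul])
    fun i j a => ?_
  rw [SB.emb_mul, LL_emb, SB.emb_mul]
  split_ifs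
  · rw [LL_emb]
  · simp

theorem star_LL_mul_LL (SB : Stabilization A W) (s t : Fin 2) (x y : W) :
    star (LL SB s x) * LL SB t y = if s = t then star x * y else 0 := by
  revert y
  refine additive_ext SB (by fun_prop) ?_ (by simp [mul_add]) ?_ fun k l b => ?_
  · split_ifs <;> fun_prop
  · intro x y; split_ifs <;> simp [mul_add]
  revert x
  refine additive_ext SB (by fun_prop) ?_ (by simp [add_mul]) ?_ fun i j a => ?_
  · split_ifs <;> fun_prop
  · intro x y; split_ifs <;> simp [add_mul]
  rw [LL_emb, LL_emb, SB.emb_star, SB.emb_star, SB.emb_mul, SB.emb_mul]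
  simp only [sh_eq]
  by_cases hst : s = t <;> by_cases hik : i = k <;> simp [hst, hik]

/-- `L_s x L_t^*`. -/
def LR (SB : Stabilization A W) (s t : Fin 2) (x : W) : W := LL SB s (star (LL SB t (star x)))

theorem LR_cont (SB : Stabilization A W) (s t : Fin 2) : Continuous (LR SB s t) := by
  unfold LR; fun_prop

theorem LR_add (SB : Stabilization A W) (s t : Fin 2) (x y : W) :
    LR SB s t (x + y) = LR SB s t x + LR SB s t y := by
  simp [LR]

theorem LR_zero (SB : Stabilization A W) (s t : Fin 2) : LR SB s t 0 = 0 := by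
  simp [LR]

theorem LR_smul (SB : Stabilization A W) (s t : Fin 2) (r : ℝ) (x : W) :
    LR SB s t (r • x) = r • LR SB s t x := by
  have h : ∀ (s : Fin 2) (y : W), LL SB s (r • y) = r • LL SB s y := fun s y =>
    (LL SB s).toLinearMap.map_smul_of_tower r y
  simp [LR, h, star_smul]

theorem LR_star (SB : Stabilization A W) (s t : Fin 2) (x : W) :
    star (LR SB s t x) = LR SB t s (star x) := by
  revert x
  refine additive_ext SB ?_ ?_ ?_ ?_ fun i j a => ?_
  · exact (LR_cont SB s t).star
  · exact (LR_cont SB t s).comp continuous_star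
  · simp [LR_add]
  · simp [LR_add]
  · simp only [LR, SB.emb_star, LL_emb, star_star]

theorem LR_mul (SB : Stabilization A W) (s t u v : Fin 2) (x y : W) :
    LR SB s t x * LR SB u v y = if t = u then LR SB s v (x * y) else 0 := by
  unfold LR
  rw [← LL_mul, star_LL_mul_LL]
  split_ifs
  · congr 1
    rw [star_star, star_mul, LL_mul, star_mul, star_star]
  · simp

theorem LR_self (SB : Stabilization A W) (s t : Fin 2) (x y : W) :
    LR SB s t (x * star y) = LL SB s x * star (LL SB t y) := by
  unfold LR
  rw [star_mul, star_star, LL_mul, star_mul, star_star, LL_mul]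

/-- The `*`-homomorphism `M₂(W) → W`. -/
def PhiM (SB : Stabilization A W) (X : Matrix (Fin 2) (Fin 2) W) : W :=
  ∑ s, ∑ t, LR SB s t (X s t)

theorem PhiM_add (SB : Stabilization A W) (X Y) : PhiM SB (X + Y) = PhiM SB X + PhiM SB Y := by
  simp only [PhiM, Matrix.add_apply, LR_add, Fin.sum_univ_two]; abel

theorem PhiM_smul (SB : Stabilization A W) (r : ℝ) (X) : PhiM SB (r • X) = r • PhiM SB X := by
  simp only [PhiM, Matrix.smul_apply, LR_smul, Fin.sum_univ_two, smul_add]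

theorem PhiM_zero (SB : Stabilization A W) : PhiM SB 0 = 0 := by
  simp only [PhiM, Matrix.zero_apply, LR_zero, Fin.sum_univ_two, add_zero]

theorem PhiM_star (SB : Stabilization A W) (X) : PhiM SB (star X) = star (PhiM SB X) := by
  simp only [PhiM, Matrix.star_apply, Fin.sum_univ_two, star_add, LR_star]; abel

theorem PhiM_mul (SB : Stabilization A W) (X Y) : PhiM SB (X * Y) = PhiM SB X * PhiM SB Y := by
  simp only [PhiM, Matrix.mul_apply, Fin.sum_univ_two, LR_add, mul_add, add_mul, LR_mul]
  simp
  abel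

theorem PhiM_diag (SB : Stabilization A W) (a : W) :
    PhiM SB (fun i j => if i = 0 ∧ j = 0 then a else 0) = LR SB 0 0 a := by
  simp [PhiM, Fin.sum_univ_two, LR_zero]

theorem sq_add_le (x y : W) :
    star (x + y) * (x + y) ≤ (2 : ℝ) • (star x * x + star y * y) := by
  rw [← sub_nonneg]
  convert star_mul_self_nonneg (x - y) using 1
  simp only [two_smul, star_add, star_sub, mul_add, add_mul, mul_sub, sub_mul]
  abel

theorem dTau_sq_add_le (SB : Stabilization A W) (τ : QuasiTrace W) (x y : W) :
    dTau τ (star (x + y) * (x + y)) ≤ dTau τ (star x * x) + dTau τ (star y * y) := by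
  set u := LL SB 0 x
  set v := LL SB 1 y
  have huu : star u * u = star x * x := by simp [u, star_LL_mul_LL]
  have hvv : star v * v = star y * y := by simp [v, star_LL_mul_LL]
  have huv : star u * v = 0 := by simp [u, v, star_LL_mul_LL]
  have hvu : star v * u = 0 := by simp [u, v, star_LL_mul_LL]
  have hZ : star (u + v) * (u + v) = star x * x + star y * y := by
    simp only [star_add, mul_add, add_mul, huu, hvv, huv, hvu]; abel
  have hZ' : (u + v) * star (u + v) ≤ (2 : ℝ) • (u * star u + v * star v) := by
    have := sq_add_le (star u) (star v)
    simpa only [← star_add, star_star] using this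
  have hp : 0 ≤ u * star u + v * star v :=
    add_nonneg (mul_star_self_nonneg _) (mul_star_self_nonneg _)
  have horth : u * star u * (v * star v) = 0 := by
    rw [mul_assoc, ← mul_assoc (star u), huv]; simp
  calc dTau τ (star (x + y) * (x + y))
      ≤ dTau τ ((2 : ℝ) • (star x * x + star y * y)) :=
        dTau_le_of_le τ (star_mul_self_nonneg _) (sq_add_le x y)
    _ ≤ dTau τ (star x * x + star y * y) :=
        dTau_smul_le τ (by norm_num) (add_nonneg (star_mul_self_nonneg _) (star_mul_self_nonneg _))
    _ = dTau τ ((u + v) * star (u + v)) := by rw [← hZ, dTau_swap]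
    _ ≤ dTau τ ((2 : ℝ) • (u * star u + v * star v)) :=
        dTau_le_of_le τ (mul_star_self_nonneg _) hZ'
    _ ≤ dTau τ (u * star u + v * star v) := dTau_smul_le τ (by norm_num) hp
    _ = dTau τ (u * star u) + dTau τ (v * star v) :=
        dTau_add_orth τ (mul_star_self_nonneg _) (mul_star_self_nonneg _) horth
    _ = _ := by rw [← dTau_swap τ u, ← dTau_swap τ v, huu, hvv]

end Stab

/-! Part 5 -/

section Bounds

theorem continuous_eval {p : W} (hp : p ∈ pedersen W) :
    Continuous fun τ : QuasiTrace W => τ.toFun p :=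
  (continuous_apply (⟨p, hp⟩ : pedersen W)).comp
    (continuous_induced_dom (f := fun τ : QuasiTrace W => fun a : pedersen W => τ.toFun a))

/-- The corner embedding as a star homomorphism. -/
def emb00 (SB : Stabilization A W) : A →⋆ₙₐ[ℂ] W where
  toFun := SB.emb 0 0
  map_smul' := fun c x => map_smul (SB.emb 0 0) c x
  map_zero' := map_zero _
  map_add' := map_add _
  map_mul' := fun x y => by rw [SB.emb_mul]; simp
  map_star' := fun x => (SB.emb_star 0 0 x).symm

theorem emb00_apply (SB : Stabilization A W) (a : A) : emb00 SB a = SB.emb 0 0 a := rfl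

theorem emb00_cont (SB : Stabilization A W) : Continuous (emb00 SB) :=
  AddMonoidHomClass.continuous_of_bound (emb00 SB) 1 fun a => by
    rw [emb00_apply, SB.norm_emb, one_mul]

theorem emb00_nonneg (SB : Stabilization A W) {a : A} (ha : 0 ≤ a) : 0 ≤ SB.emb 0 0 a := by
  obtain ⟨s, -, hs, rfl⟩ := exists_sqrt ha
  have : SB.emb 0 0 (s * s) = star (SB.emb 0 0 s) * SB.emb 0 0 s := by
    rw [SB.emb_star, SB.emb_mul, hs]; simp
  rw [this]; exact star_mul_self_nonneg _

theorem fEps_emb00 (SB : Stabilization A W) {a : A} (ha : 0 ≤ a) (ε : ℝ) :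
    fEps ε (SB.emb 0 0 a) = SB.emb 0 0 (fEps ε a) := by
  have h := NonUnitalStarAlgHom.map_cfcₙ (R := ℝ) (S := ℂ) (emb00 SB) (cutoff ε) a
    ((continuous_cutoff ε).continuousOn) (cutoff_zero ε) (emb00_cont SB) (IsSelfAdjoint.of_nonneg ha)
    (IsSelfAdjoint.of_nonneg (emb00_nonneg SB ha))
  exact h.symm

theorem dTau_emb00_le (SB : Stabilization A W) {τ : QuasiTrace W} (hτ : τ ∈ QTSet SB) {a : A}
    (ha : 0 ≤ a) : dTau τ (SB.emb 0 0 a) ≤ 1 := by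
  refine iSup_le fun n => ?_
  rw [fEps_emb00 SB ha]
  have h : (⨆ a : {a : A // 0 ≤ a ∧ ‖a‖ ≤ 1}, τ.toFun (SB.emb 0 0 a)) = 1 := hτ
  rw [← h]
  exact le_iSup (fun a : {a : A // 0 ≤ a ∧ ‖a‖ ≤ 1} => τ.toFun (SB.emb 0 0 a))
    ⟨fEps (1 / (n + 1)) a, fEps_nonneg _ _, fEps_norm_le _ _⟩

theorem isClosed_dTau_le {p : W} (hp : 0 ≤ p) (C : ℝ≥0∞) :
    IsClosed {τ : QuasiTrace W | dTau τ p ≤ C} := by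
  have : {τ : QuasiTrace W | dTau τ p ≤ C}
      = ⋂ n : ℕ, {τ | τ.toFun (fEps (1 / (n + 1)) p) ≤ C} := by
    ext τ; simp [dTau]
  rw [this]
  refine isClosed_iInter fun n => ?_
  exact isClosed_le (continuous_eval (fEps_mem_pedersen hp (one_div_pos' n))) continuous_const

theorem dTau_emb_le (SB : Stabilization A W) {τ : QuasiTrace W} (hτ : τ ∈ closure (QTSet SB))
    (i j : ℕ) (a : A) : dTau τ (star (SB.emb i j a) * SB.emb i j a) ≤ 1 := by
  refine closure_minimal (t := {τ : QuasiTrace W | _ ≤ _}) ?_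
    (isClosed_dTau_le (star_mul_self_nonneg _) 1) hτ
  intro τ hτ
  have h1 : star (SB.emb i j a) * SB.emb i j a = star (SB.emb 0 j a) * SB.emb 0 j a := by
    simp [SB.emb_star, SB.emb_mul]
  have h2 : SB.emb 0 j a * star (SB.emb 0 j a) = SB.emb 0 0 (a * star a) := by
    simp [SB.emb_star, SB.emb_mul]
  show dTau τ _ ≤ 1
  rw [h1, dTau_swap, h2]
  exact dTau_emb00_le SB hτ (mul_star_self_nonneg a)

theorem pedersen_bound_aux (SB : Stabilization A W) {x : W} (hx : x ∈ pedersen W) :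
    ∃ M : NNReal, ∀ τ ∈ closure (QTSet SB), dTau τ (star x * x) ≤ M := by
  set I : Set W := {x | ∃ M : NNReal, ∀ τ ∈ closure (QTSet SB), dTau τ (star x * x) ≤ M} with hI
  have h0 : (0 : W) ∈ I := ⟨0, fun τ _ => by
    simp [dTau, fEps, τ.map_zero]⟩
  have hadd : ∀ x ∈ I, ∀ y ∈ I, x + y ∈ I := by
    rintro x ⟨M, hM⟩ y ⟨N, hN⟩
    refine ⟨M + N, fun τ hτ => (dTau_sq_add_le SB τ x y).trans ?_⟩
    push_cast
    exact add_le_add (hM τ hτ) (hN τ hτ)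
  have hid : IsIdealIn W Set.univ I := by
    refine ⟨Set.subset_univ _, h0, hadd, ?_, ?_⟩
    · rintro x ⟨M, hM⟩
      exact ⟨M, fun τ hτ => by simpa using hM τ hτ⟩
    · rintro x ⟨M, hM⟩ b -
      refine ⟨⟨M, fun τ hτ => ?_⟩, ⟨M, fun τ hτ => ?_⟩⟩
      · have := dTau_conj_le τ b (star_mul_self_nonneg x)
        rw [show star (x * b) * (x * b) = star b * (star x * x) * b by simp only [star_mul, mul_assoc]]
        exact this.trans (hM τ hτ)
      · rw [show star (b * x) * (b * x) = star x * (star b * b) * x by simp only [star_mul, mul_assoc]]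
        rw [show star x * (star b * b) * x = star (b * x) * (b * x) by simp only [star_mul, mul_assoc],
          dTau_swap, show (b * x) * star (b * x) = star (star b) * (x * star x) * star b by
            simp only [star_mul, mul_assoc, star_star]]
        refine (dTau_conj_le τ (star b) (mul_star_self_nonneg x)).trans ?_
        rw [← dTau_swap]; exact hM τ hτ
  have hdense : Set.univ ⊆ closure I := by
    have h1 : Set.range (EI SB id) ⊆ I := by
      rintro _ ⟨p, rfl⟩
      induction p using Finsupp.induction_linear with
      | zero => simpa using h0
      | add p q hp hq => rw [map_add]; exact hadd _ hp _ hq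
      | single p a =>
        rw [EI_single]
        exact ⟨1, fun τ hτ => by simpa using dTau_emb_le SB hτ _ _ _⟩
    intro y _
    exact closure_mono h1 (EI_dense SB y)
  have : pedersen W ⊆ I := by
    unfold pedersen pedersenIn
    exact Set.biInter_subset_of_mem (t := fun I => I) ⟨hid, hdense⟩
  exact this hx

theorem pedersen_bound (SB : Stabilization A W) {x : W} (hx : x ∈ pedersen W) (hx0 : 0 ≤ x) :
    ∃ M : NNReal, ∀ τ ∈ closure (QTSet SB), dTau τ x ≤ M := by
  obtain ⟨M, hM⟩ := pedersen_bound_aux SB hx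
  refine ⟨M, fun τ hτ => le_trans ?_ (hM τ hτ)⟩
  have hsa := IsSelfAdjoint.of_nonneg hx0
  have h1 : x = CFC.sqrt (x * x) := (CFC.sqrt_mul_self x hx0).symm
  have hxx : 0 ≤ x * x := by
    have := star_mul_self_nonneg x; rwa [hsa.star_eq] at this
  refine dTau_le_of_mem_her τ (star_mul_self_nonneg x) hx0 ?_
  rw [hsa.star_eq]
  rw [CFC.sqrt_eq_real_sqrt (x * x) hxx] at h1
  have h2 := cfcₙ_mem_her hxx Real.sqrt
  rwa [← h1] at h2

theorem tau_bound (SB : Stabilization A W) {x : W} (hx : x ∈ pedersen W) (hx0 : 0 ≤ x) :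
    ∃ M : NNReal, ∀ τ ∈ closure (QTSet SB), ∀ y ∈ her x, 0 ≤ y → ∀ r : ℝ, ‖y‖ ≤ r →
      τ.toFun y ≤ ENNReal.ofReal r * M := by
  obtain ⟨M, hM⟩ := pedersen_bound SB hx hx0
  exact ⟨M, fun τ hτ y hy hy0 r hr => (tau_le_norm_dTau τ hx0 hy0 hy hr).trans
    (mul_le_mul_right (hM τ hτ) _)⟩

end Bounds

/-! Part 6 -/

section Reg

open Classical in
/-- Lower semicontinuous regularisation. -/
def reg (t : W → ℝ≥0∞) (a : W) : ℝ≥0∞ :=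
  if 0 ≤ a then ⨆ ε : {e : ℝ // 0 < e}, t (pp ε.1 a) else 0

theorem reg_of_nonneg (t : W → ℝ≥0∞) {a : W} (ha : 0 ≤ a) :
    reg t a = ⨆ ε : {e : ℝ // 0 < e}, t (pp ε.1 a) := by
  unfold reg; rw [if_pos ha]

theorem le_reg (t : W → ℝ≥0∞) {a : W} (ha : 0 ≤ a) {ε : ℝ} (hε : 0 < ε) :
    t (pp ε a) ≤ reg t a := by
  rw [reg_of_nonneg t ha]
  exact le_iSup (fun ε : {e : ℝ // 0 < e} => t (pp ε.1 a)) ⟨ε, hε⟩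

theorem reg_le_of (t : W → ℝ≥0∞) {a : W} (ha : 0 ≤ a) {C : ℝ≥0∞}
    (h : ∀ ε : ℝ, 0 < ε → t (pp ε a) ≤ C) : reg t a ≤ C := by
  rw [reg_of_nonneg t ha]
  exact iSup_le fun ε => h ε.1 ε.2

theorem reg_le {t : W → ℝ≥0∞} (ht : Good t) {a : W} (ha : 0 ≤ a) : reg t a ≤ t a :=
  reg_le_of t ha fun ε hε => ht.mono _ _ (pp_nonneg _ _) (pp_le ha hε.le)

/-- Local boundedness. -/
def LocBdd (t : W → ℝ≥0∞) : Prop :=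
  ∀ x ∈ pedersen W, 0 ≤ x → ∃ M : NNReal, ∀ y ∈ her x, 0 ≤ y → ∀ r : ℝ, ‖y‖ ≤ r →
      t y ≤ ENNReal.ofReal r * M

theorem reg_eq {t : W → ℝ≥0∞} (ht : Good t) (hb : LocBdd t) {a : W} (ha : 0 ≤ a)
    (hp : a ∈ pedersen W) : reg t a = t a := by
  refine le_antisymm (reg_le ht ha) ?_
  obtain ⟨M, hM⟩ := hb a hp ha
  have key : ∀ ε : ℝ, 0 < ε → t a ≤ reg t a + ENNReal.ofReal ε * M := by
    intro ε hε
    have h1 : t (cfcₙ (fun s : ℝ => s) a)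
        = t (cfcₙ (fun t : ℝ => max (t - ε) 0) a) + t (cfcₙ (fun s => min s ε) a) := by
      refine ht.add.cfc_add ha (by fun_prop) (by fun_prop) (pp_fun_zero hε.le) (by simp [hε.le])
        (fun s hs => le_max_right _ _) (fun s hs => le_min hs hε.le) fun s hs => ?_
      rcases le_total s ε with h | h
      · rw [max_eq_right (by linarith), min_eq_left h]; ring
      · rw [max_eq_left (by linarith), min_eq_right h]; ring
    rw [cfcₙ_id' ℝ a] at h1
    rw [h1]
    refine add_le_add (le_reg t ha hε) (hM _ (cfcₙ_mem_her ha _) (cfcₙ_nonneg fun s hs =>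
      le_min (qs_nonneg ha hs) hε.le) ε ?_)
    refine norm_cfcₙ_le fun s hs => ?_
    rw [Real.norm_of_nonneg (le_min (qs_nonneg ha hs) hε.le)]
    exact min_le_right _ _
  have hlim : Tendsto (fun n : ℕ => reg t a + ENNReal.ofReal (1 / ((n : ℝ) + 1)) * M) atTop
      (𝓝 (reg t a + ENNReal.ofReal 0 * M)) := by
    refine tendsto_const_nhds.add (ENNReal.Tendsto.mul_const ?_ (Or.inr ENNReal.coe_ne_top))
    exact ENNReal.tendsto_ofReal tendsto_one_div'
  have := ge_of_tendsto' hlim fun n => key _ (one_div_pos' n)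
  simpa using this

theorem pp_le_reg_of_norm {t : W → ℝ≥0∞} (ht : Good t) {a a' : W} (ha : 0 ≤ a) (ha' : 0 ≤ a')
    {ε : ℝ} (h : ‖a - a'‖ < ε) : t (pp ε a) ≤ reg t a' := by
  set δ := (ε - ‖a - a'‖) / 2 with hδ
  have hδ0 : 0 < δ := by rw [hδ]; linarith
  refine (ht.pp_le_of_norm ha (pp_nonneg δ a') ?_).trans (le_reg t ha' hδ0)
  calc ‖a - pp δ a'‖ = ‖(a - a') + (a' - pp δ a')‖ := by congr 1; abel
    _ ≤ ‖a - a'‖ + ‖a' - pp δ a'‖ := norm_add_le _ _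
    _ ≤ ‖a - a'‖ + δ := by gcongr; exact norm_sub_pp_le ha' hδ0.le
    _ < ε := by rw [hδ]; linarith

theorem reg_mono {t : W → ℝ≥0∞} (ht : Good t) {x y : W} (hx : 0 ≤ x) (hxy : x ≤ y) :
    reg t x ≤ reg t y := by
  refine reg_le_of t hx fun ε hε => ?_
  obtain ⟨e, he, he1, h1⟩ := exists_pp_factor (s := ε / 2) (s' := ε) (by linarith) (by linarith) x hx
  have h2 : pp ε x ≤ e * pp (ε / 2) y * e := by
    rw [h1]
    exact (sub_le_sub_right (conj_le_conj' he hxy) _).trans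
      (conj_sub_le_pp (by linarith) he (hx.trans hxy))
  exact (ht.mono _ _ (pp_nonneg _ _) h2).trans ((ht.conj_le he he1 (pp_nonneg _ _)).trans
    (le_reg t (hx.trans hxy) (by linarith)))

theorem reg_tr {t : W → ℝ≥0∞} (ht : Good t) (z : W) :
    reg t (star z * z) = reg t (z * star z) := by
  rw [reg_of_nonneg t (star_mul_self_nonneg z), reg_of_nonneg t (mul_star_self_nonneg z)]
  congr 1; ext ε
  obtain ⟨x, h1, h2⟩ := exists_swap_cfc z ε.2 (pp_cont ε.1) (fun s => le_max_right _ _)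
    (fun s hs => max_eq_right (by linarith))
  unfold pp
  rw [← h1, ← h2, ht.tr]

theorem pp_smul {r ε : ℝ} (hr : 0 < r) {a : W} (ha : 0 ≤ a) (hε : 0 < ε) :
    pp ε (r • a) = r • pp (ε / r) a := by
  unfold pp
  rw [← cfcₙ_comp_smul r (fun t : ℝ => max (t - ε) 0) a (by fun_prop) (by simp [hε.le]),
    ← cfcₙ_smul r (fun t : ℝ => max (t - ε / r) 0) a (by fun_prop) (by simp; positivity)]
  refine cfcₙ_congr fun s _ => ?_
  simp only [smul_eq_mul]
  rw [mul_max_of_nonneg _ _ hr.le, mul_zero, mul_sub, mul_div_cancel₀ _ hr.ne']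

theorem reg_smul {t : W → ℝ≥0∞} (ht : Good t) {r : ℝ} (hr : 0 < r) {a : W} (ha : 0 ≤ a) :
    reg t (r • a) = ENNReal.ofReal r * reg t a := by
  rw [reg_of_nonneg t ha, reg_of_nonneg t (smul_nonneg hr.le ha), ENNReal.mul_iSup]
  refine le_antisymm (iSup_le fun ε => ?_) (iSup_le fun ε => ?_)
  · rw [pp_smul hr ha ε.2, ht.smul _ _ hr (pp_nonneg _ _)]
    exact le_iSup (fun ε : {e : ℝ // 0 < e} => ENNReal.ofReal r * t (pp ε.1 a))
      ⟨ε.1 / r, div_pos ε.2 hr⟩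
  · rw [← ht.smul _ _ hr (pp_nonneg _ _)]
    have := pp_smul (ε := r * ε.1) hr ha (mul_pos hr ε.2)
    rw [mul_div_cancel_left₀ _ hr.ne'] at this
    rw [← this]
    exact le_iSup (fun ε : {e : ℝ // 0 < e} => t (pp ε.1 (r • a))) ⟨r * ε.1, mul_pos hr ε.2⟩

theorem reg_conj_le {t : W → ℝ≥0∞} (ht : Good t) {e p : W} (he : star e = e) (he1 : ‖e‖ ≤ 1)
    (hp : 0 ≤ p) : reg t (e * p * e) ≤ reg t p := by
  obtain ⟨k, hk, hkk, h1, h2, h3⟩ := star_conj_eq (w := e) hp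
  have h4 : reg t (e * p * e) = reg t (k * (e * star e) * k) := by
    rw [← h2, ← reg_tr ht, h1, he]
  rw [h4]
  refine reg_mono ht (conj_nonneg' hk (mul_star_self_nonneg e)) (h3.trans ?_)
  refine smul_le_of_le_one ?_ hp
  rw [CStarRing.norm_self_mul_star]
  exact mul_le_one₀ he1 (norm_nonneg _) he1

theorem tendsto_reg {t : W → ℝ≥0∞} (ht : Good t) (hb : LocBdd t) {c x : W} (hc : 0 ≤ c)
    (hx : 0 ≤ x) (hxc : x ∈ her c) :
    Tendsto (fun n : ℕ => t (fEps (1 / ((n : ℝ) + 1)) c * x * fEps (1 / ((n : ℝ) + 1)) c))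
      atTop (𝓝 (reg t x)) := by
  have hlim := tendsto_conj_fEps_of_mem_her hc hxc
  refine tendsto_order.2 ⟨fun l hl => ?_, fun u hu => ?_⟩
  · rw [reg_of_nonneg t hx] at hl
    obtain ⟨ε, hε⟩ := lt_iSup_iff.1 hl
    have := (tendsto_iff_norm_sub_tendsto_zero.1 hlim).eventually (gt_mem_nhds ε.2)
    filter_upwards [this] with n hn
    refine hε.trans_le (ht.pp_le_of_norm hx (conj_nonneg' (fEps_star _ _) hx) ?_)
    rwa [norm_sub_rev]
  · refine Eventually.of_forall fun n => lt_of_le_of_lt ?_ hu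
    have hp : fEps (1 / ((n : ℝ) + 1)) c * x * fEps (1 / ((n : ℝ) + 1)) c ∈ pedersen W :=
      (pedersen_mul_right (fEps_mem_pedersen hc (one_div_pos' n)) _).2
    rw [← reg_eq ht hb (conj_nonneg' (fEps_star _ _) hx) hp]
    exact reg_conj_le ht (fEps_star _ _) (fEps_norm_le _ _) hx

theorem reg_add {t : W → ℝ≥0∞} (ht : Good t) (hb : LocBdd t) {a b : W} (ha : 0 ≤ a)
    (hb0 : 0 ≤ b) (hab : a * b = b * a) : reg t (a + b) = reg t a + reg t b := by
  have hc := add_nonneg ha hb0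
  have h1 := tendsto_reg ht hb hc ha (mem_her_of_le ha (le_add_of_nonneg_right hb0))
  have h2 := tendsto_reg ht hb hc hb0 (mem_her_of_le hb0 (le_add_of_nonneg_left ha))
  have h3 := tendsto_reg ht hb hc hc (mem_her_self hc)
  refine tendsto_nhds_unique h3 ((h1.add h2).congr fun n => ?_)
  set g := fEps (1 / ((n : ℝ) + 1)) (a + b) with hg
  have hcs : IsSelfAdjoint (a + b) := IsSelfAdjoint.of_nonneg hc
  have hga : g * a = a * g := by
    have : Commute (a + b) a := by
      show (a + b) * a = a * (a + b)
      rw [add_mul, mul_add, hab]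
    exact (hcs.commute_cfcₙ this _).eq
  have hgb : g * b = b * g := by
    have : Commute (a + b) b := by
      show (a + b) * b = b * (a + b)
      rw [add_mul, mul_add, hab]
    exact (hcs.commute_cfcₙ this _).eq
  rw [← ht.add _ _ (conj_nonneg' (fEps_star _ _) ha) (conj_nonneg' (fEps_star _ _) hb0)]
  · rw [mul_add, add_mul]
  · have c1 : Commute g a := hga
    have c2 : Commute g b := hgb
    have c3 : Commute a b := hab
    have c4 : Commute g (g * b * g) := ((Commute.refl g).mul_right c2).mul_right (Commute.refl g)
    have c5 : Commute a (g * b * g) := (c1.symm.mul_right c3).mul_right c1.symm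
    exact ((c4.mul_left c5).mul_left c4).eq

/-- The quasitrace obtained by regularisation. -/
theorem exists_quasitrace (SB : Stabilization A W) {t : W → ℝ≥0∞} (ht : Good t) (hb : LocBdd t) :
    ∃ τ : QuasiTrace W, ∀ a ∈ pedersen W, 0 ≤ a → τ.toFun a = t a := by
  classical
  refine ⟨{ toFun := reg t
            zero_of_not_nonneg := fun a ha => by unfold reg; rw [if_neg ha]
            map_zero := ?_
            map_smul := fun r a hr ha => reg_smul ht hr ha
            map_add_of_commute := fun a b ha hb' hab => reg_add ht hb ha hb' hab
            map_star_mul_self := reg_tr ht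
            lowerSemicontinuousOn := ?_
            finite_on_pedersen := ?_
            exists_matrix_extension := ?_ }, fun a hp ha => reg_eq ht hb ha hp⟩
  · exact le_antisymm ((reg_le ht le_rfl).trans ht.zero.le) zero_le
  · intro a ha c hc
    rw [reg_of_nonneg t ha] at hc
    obtain ⟨ε, hε⟩ := lt_iSup_iff.1 hc
    filter_upwards [self_mem_nhdsWithin, nhdsWithin_le_nhds (Metric.ball_mem_nhds a ε.2)] with y hy hy2
    refine hε.trans_le (pp_le_reg_of_norm ht ha hy ?_)
    rw [mem_ball_iff_norm] at hy2
    rwa [norm_sub_rev]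
  · intro a hp ha
    obtain ⟨M, hM⟩ := hb a hp ha
    refine ((reg_le ht ha).trans (hM a (mem_her_self ha) ha _ le_rfl)).trans_lt ?_
    exact ENNReal.mul_lt_top ENNReal.ofReal_lt_top ENNReal.coe_lt_top
  · have h00 : ∀ y : Matrix (Fin 2) (Fin 2) W, 0 ≤ (star y * y) 0 0 := fun y => by
      simp only [Matrix.mul_apply, Matrix.star_apply, Fin.sum_univ_two]
      exact add_nonneg (star_mul_self_nonneg _) (star_mul_self_nonneg _)
    have hpos : ∀ y : Matrix (Fin 2) (Fin 2) W, 0 ≤ PhiM SB (star y * y) := fun y => by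
      rw [PhiM_mul, PhiM_star]; exact star_mul_self_nonneg _
    refine ⟨fun X => if 0 ≤ X 0 0 then reg t (PhiM SB X) else 0, ?_, ?_, ?_, ?_, ?_⟩
    · intro a
      simp only [PhiM_diag, and_self, if_true]
      by_cases ha : 0 ≤ a
      · rw [if_pos ha]
        obtain ⟨s, -, hs, rfl⟩ := exists_sqrt ha
        conv_lhs => rw [← hs]
        rw [hs, show s * s = s * star s by rw [hs], LR_self, ← reg_tr ht, star_LL_mul_LL, if_pos rfl, hs]
      · rw [if_neg ha]; unfold reg; rw [if_neg ha]
    · simp only [Matrix.zero_apply, le_refl, if_true, PhiM_zero]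
      exact le_antisymm ((reg_le ht le_rfl).trans ht.zero.le) zero_le
    · rintro r _ hr ⟨y, rfl⟩
      simp only [Matrix.smul_apply]
      rw [if_pos (h00 y), if_pos (smul_nonneg hr.le (h00 y)), PhiM_smul, reg_smul ht hr (hpos y)]
    · rintro _ _ ⟨y, rfl⟩ ⟨z, rfl⟩ h
      have h3 : 0 ≤ (star y * y + star z * z) 0 0 := add_nonneg (h00 y) (h00 z)
      simp only []
      rw [if_pos (h00 y), if_pos (h00 z), if_pos h3, PhiM_add,
        reg_add ht hb (hpos y) (hpos z)]
      rw [← PhiM_mul, h, PhiM_mul]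
    · intro x
      have h1 := h00 (star x)
      rw [star_star] at h1
      simp only []
      rw [if_pos (h00 x), if_pos h1, PhiM_mul, PhiM_mul, PhiM_star, reg_tr ht]

theorem isCompact_S (SB : Stabilization A W) : IsCompact (closure (QTSet SB)) := by
  rw [isCompact_iff_ultrafilter_le_nhds]
  intro U hU
  have hUS : ∀ᶠ τ in (U : Filter (QuasiTrace W)), τ ∈ closure (QTSet SB) := le_principal_iff.1 hU
  set t : W → ℝ≥0∞ := fun x => (U.map (fun τ : QuasiTrace W => τ.toFun x)).lim with ht
  have hlim : ∀ x, Tendsto (fun τ : QuasiTrace W => τ.toFun x) U (𝓝 (t x)) := fun x =>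
    (U.map (fun τ : QuasiTrace W => τ.toFun x)).le_nhds_lim
  have hgood : Good t := by
    refine ⟨?_, ?_, ?_, ?_, ?_⟩
    · exact tendsto_nhds_unique (hlim 0)
        (tendsto_const_nhds.congr fun τ => τ.map_zero.symm)
    · intro r a hr ha
      refine tendsto_nhds_unique (hlim _) ?_
      refine (ENNReal.Tendsto.const_mul (hlim a) (Or.inr ENNReal.ofReal_ne_top)).congr fun τ => ?_
      exact (τ.map_smul r a hr ha).symm
    · intro a b ha hb hab
      exact tendsto_nhds_unique (hlim _) (((hlim a).add (hlim b)).congr fun τ =>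
        (τ.map_add_of_commute a b ha hb hab).symm)
    · intro x
      exact tendsto_nhds_unique (hlim _) ((hlim _).congr fun τ => (τ.map_star_mul_self x).symm)
    · intro x y hx hxy
      exact le_of_tendsto_of_tendsto' (hlim x) (hlim y) fun τ => tau_mono τ hx hxy
  have hbdd : LocBdd t := by
    intro x hx hx0
    obtain ⟨M, hM⟩ := tau_bound SB hx hx0
    refine ⟨M, fun y hy hy0 r hr => le_of_tendsto (hlim y) ?_⟩
    filter_upwards [hUS] with τ hτ
    exact hM τ hτ y hy hy0 r hr
  obtain ⟨τ₀, hτ₀⟩ := exists_quasitrace SB hgood hbdd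
  have hle : (U : Filter (QuasiTrace W)) ≤ 𝓝 τ₀ := by
    rw [nhds_induced, ← tendsto_iff_comap, tendsto_pi_nhds]
    rintro ⟨a, ha⟩
    by_cases h0 : 0 ≤ a
    · have := hlim a
      rw [← hτ₀ a ha h0] at this
      exact this
    · simp only [τ₀.zero_of_not_nonneg a h0]
      exact tendsto_const_nhds.congr fun τ => (τ.zero_of_not_nonneg a h0).symm
  exact ⟨τ₀, isClosed_closure.mem_of_tendsto hle hUS, hle⟩

end Reg

/-! Part 7 -/

section Prime

/-- A closed subset with the ideal properties of a simple algebra is trivial. -/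
theorem simple_ideal (hs : IsSimpleCStar A) {I : Set A} (hc : IsClosed I) (h0 : (0 : A) ∈ I)
    (hadd : ∀ x ∈ I, ∀ y ∈ I, x + y ∈ I) (hneg : ∀ x ∈ I, -x ∈ I)
    (hl : ∀ x, ∀ y ∈ I, x * y ∈ I) (hr : ∀ x ∈ I, ∀ y, x * y ∈ I) {x : A} (hx : x ∈ I)
    (hx0 : x ≠ 0) (y : A) : y ∈ I := by
  set J : TwoSidedIdeal A := TwoSidedIdeal.mk' I h0 (fun {x y} hx hy => hadd x hx y hy)
    (fun {x} hx => hneg x hx) (fun {x y} hy => hl x y hy) (fun {x y} hx => hr x hx y) with hJ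
  have hJI : (J : Set A) = I := TwoSidedIdeal.coe_mk' _ _ _ _ _ _
  rcases hs.2 J (by rwa [hJI]) with h | h
  · rw [hJI] at h
    rw [h] at hx
    exact absurd hx hx0
  · rw [hJI] at h
    rw [h]; trivial

theorem prime_A (hs : IsSimpleCStar A) {x y : A} (hx : x ≠ 0) (hy : y ≠ 0) :
    ∃ w, x * w * y ≠ 0 := by
  by_contra! h
  have key : ∀ z : A, ∀ w, x * w * z = 0 := by
    intro z
    refine simple_ideal hs (I := {z | ∀ w, x * w * z = 0}) ?_ ?_ ?_ ?_ ?_ ?_ h hy z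
    · simp only [Set.ofPred_forall]
      exact isClosed_iInter fun w => isClosed_eq (by fun_prop) continuous_const
    · intro w; simp
    · intro a ha b hb w; rw [mul_add, ha w, hb w, add_zero]
    · intro a ha w; rw [mul_neg, ha w, neg_zero]
    · intro a b hb w; rw [← mul_assoc, mul_assoc x, hb]
    · intro a ha b w; rw [← mul_assoc, ha w, zero_mul]
  have h1 := key (x * star x) (star x)
  have h2 : x * star x = 0 := by
    rw [← CStarRing.star_mul_self_eq_zero_iff]
    simpa using h1
  exact hx ((CStarRing.mul_star_self_eq_zero_iff x).1 h2)

/-- Minimal projections. -/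
structure MP (p : A) : Prop where
  star : star p = p
  sq : p * p = p
  ne : p ≠ 0
  min : ∀ z, ∃ μ : ℂ, p * z * p = μ • p

theorem sq_of_no_orth {c y : A}
    (hno : ∀ x ∈ her c, ∀ z ∈ her c, 0 ≤ x → 0 ≤ z → x * z = 0 → x = 0 ∨ z = 0)
    (hy : y ∈ her c) (hy0 : 0 ≤ y) : ∃ l : ℝ, y * y = l • y ∧ (y ≠ 0 → 0 < l) := by
  by_cases h0 : ∀ s ∈ quasispectrum ℝ y, s = 0
  · have : y = 0 := by
      rw [← cfcₙ_id' ℝ y, ← cfcₙ_const_zero ℝ y]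
      exact cfcₙ_congr fun s hs => h0 s hs
    exact ⟨0, by simp [this], fun h => absurd this h⟩
  push Not at h0
  obtain ⟨l, hl, hl0⟩ := h0
  have hlpos : 0 < l := lt_of_le_of_ne (qs_nonneg hy0 hl) hl0.symm
  have key : ∀ s ∈ quasispectrum ℝ y, s = 0 ∨ s = l := by
    intro s hs
    by_contra! hcon
    have hspos : 0 < s := lt_of_le_of_ne (qs_nonneg hy0 hs) hcon.1.symm
    have habs : 0 < |s - l| := abs_pos.2 (sub_ne_zero.2 hcon.2)
    set δ := min (min s l) (|s - l| / 2) with hδ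
    have hδ0 : 0 < δ := lt_min (lt_min hspos hlpos) (by linarith)
    have hδs : δ ≤ s := (min_le_left _ _).trans (min_le_left _ _)
    have hδl : δ ≤ l := (min_le_left _ _).trans (min_le_right _ _)
    have hδd : δ ≤ |s - l| / 2 := min_le_right _ _
    clear_value δ
    obtain ⟨F, hF⟩ : ∃ F : ℝ → ℝ → ℝ, F = fun u t => max 0 (δ - |t - u|) := ⟨_, rfl⟩
    have hFc : ∀ u, Continuous (F u) := fun u => by rw [hF]; fun_prop
    have hF0 : ∀ u, δ ≤ u → F u 0 = 0 := fun u hu => by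
      simp only [hF, zero_sub, abs_neg]
      rw [abs_of_nonneg (hδ0.le.trans hu)]
      exact max_eq_left (by linarith)
    have hne : ∀ u, δ ≤ u → u ∈ quasispectrum ℝ y → cfcₙ (F u) y ≠ 0 := by
      intro u hu huy h
      have h1 := norm_apply_le_norm_cfcₙ (F u) y huy (hFc u).continuousOn (hF0 u hu)
        (IsSelfAdjoint.of_nonneg hy0)
      rw [h, norm_zero] at h1
      have h2 : F u u = δ := by simp [hF, hδ0.le]
      rw [h2, Real.norm_of_nonneg hδ0.le] at h1
      linarith
    have hmul : cfcₙ (F s) y * cfcₙ (F l) y = 0 := by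
      rw [← cfcₙ_mul (F s) (F l) y (hFc s).continuousOn (hF0 s hδs) (hFc l).continuousOn (hF0 l hδl),
        ← cfcₙ_const_zero ℝ y]
      refine cfcₙ_congr fun t _ => ?_
      simp only [hF]
      rcases le_total δ |t - s| with h | h
      · rw [max_eq_left (by linarith), zero_mul]
      · have : |s - l| ≤ |t - s| + |t - l| := by
          have := abs_sub_le s t l
          rwa [abs_sub_comm s t] at this
        rw [max_eq_left (b := δ - |t - l|) (by linarith), mul_zero]
    have hmem : ∀ u, cfcₙ (F u) y ∈ her c := fun u => her_subset hy (cfcₙ_mem_her hy0 _)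
    rcases hno _ (hmem s) _ (hmem l) (cfcₙ_nonneg fun _ _ => by rw [hF]; exact le_max_left _ _)
      (cfcₙ_nonneg fun _ _ => by rw [hF]; exact le_max_left _ _) hmul with h | h
    · exact hne s hδs hs h
    · exact hne l hδl hl h
  refine ⟨l, ?_, fun _ => hlpos⟩
  conv_lhs => rw [← cfcₙ_id' ℝ y]
  conv_rhs => rw [← cfcₙ_id' ℝ y]
  rw [← cfcₙ_mul (fun t : ℝ => t) (fun t : ℝ => t) y (by fun_prop) rfl (by fun_prop) rfl,
    ← cfcₙ_smul l (fun t : ℝ => t) y (by fun_prop) rfl]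
  refine cfcₙ_congr fun t ht => ?_
  rcases key t ht with h | h <;> simp [h]

theorem exists_MP {c : A} (hc : 0 ≤ c) (hc0 : c ≠ 0)
    (hno : ∀ x ∈ her c, ∀ z ∈ her c, 0 ≤ x → 0 ≤ z → x * z = 0 → x = 0 ∨ z = 0) :
    ∃ p : A, MP p := by
  -- projections from positive elements
  have hproj : ∀ y ∈ her c, 0 ≤ y → y ≠ 0 → ∃ l : ℝ, 0 < l ∧ (l⁻¹ • y) * (l⁻¹ • y) = l⁻¹ • y := by
    intro y hy hy0 hne
    obtain ⟨l, h1, h2⟩ := sq_of_no_orth hno hy hy0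
    refine ⟨l, h2 hne, ?_⟩
    rw [smul_mul_smul_comm, h1, smul_smul, mul_assoc, inv_mul_cancel₀ (h2 hne).ne', mul_one]
  obtain ⟨l, hl, hl2⟩ := hproj c (mem_her_self hc) hc hc0
  set p := l⁻¹ • c with hp
  have hli : 0 < l⁻¹ := inv_pos.2 hl
  have hp0 : 0 ≤ p := smul_nonneg hli.le hc
  have hpc : p ∈ her c := her_smul _ (mem_her_self hc)
  have hps : star p = p := (IsSelfAdjoint.of_nonneg hp0).star_eq
  have hpne : p ≠ 0 := smul_ne_zero hli.ne' hc0
  have hpos : ∀ y ∈ her p, 0 ≤ y → ∃ r : ℝ, y = r • p := by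
    intro y hy hy0
    by_cases hne : y = 0
    · exact ⟨0, by simp [hne]⟩
    obtain ⟨m, hm, hm2⟩ := hproj y (her_subset hpc hy) hy0 hne
    set q := m⁻¹ • y with hq
    have hqp : q ∈ her p := her_smul _ hy
    have hq0 : 0 ≤ q := smul_nonneg (inv_pos.2 hm).le hy0
    have hqs : star q = q := (IsSelfAdjoint.of_nonneg hq0).star_eq
    have hpq : ∀ z ∈ her p, p * z = z ∧ z * p = z := by
      intro z hz
      have hcl : IsClosed {z : A | p * z = z ∧ z * p = z} :=
        (isClosed_eq (by fun_prop) continuous_id).inter (isClosed_eq (by fun_prop) continuous_id)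
      refine closure_minimal ?_ hcl hz
      rintro _ ⟨u, rfl⟩
      constructor
      · rw [← mul_assoc, ← mul_assoc, hl2]
      · rw [mul_assoc, hl2]
    have h1 := hpq q hqp
    have h3 : star (p - q) = p - q := by rw [star_sub, hps, hqs]
    have h2 : (p - q) * (p - q) = p - q := by
      rw [sub_mul, mul_sub, mul_sub, hl2, hm2, h1.1, h1.2]; abel
    have h4 : 0 ≤ p - q := by
      have := star_mul_self_nonneg (p - q)
      rwa [h3, h2] at this
    have h5 : q * (p - q) = 0 := by rw [mul_sub, h1.2, hm2, sub_self]
    rcases hno q (her_subset hpc hqp) (p - q) (her_sub hpc (her_subset hpc hqp)) hq0 h4 h5 with h | h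
    · exact absurd h (smul_ne_zero (inv_pos.2 hm).ne' hne)
    · refine ⟨m, ?_⟩
      rw [sub_eq_zero.1 h, hq, smul_smul, mul_inv_cancel₀ hm.ne', one_smul]
  refine ⟨p, hps, hl2, hpne, fun z => ?_⟩
  clear_value p
  have hz : z ∈ Submodule.span ℂ {a : A | 0 ≤ a} := by
    rw [CStarAlgebra.span_nonneg]; trivial
  induction hz using Submodule.span_induction with
  | mem x hx =>
    obtain ⟨r, hr⟩ := hpos (p * x * p) (mul_mul_mem_her _ _) (conj_nonneg' hps hx)
    exact ⟨r, by rw [hr, Complex.coe_smul]⟩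
  | zero => exact ⟨0, by simp⟩
  | add x y _ _ hx hy =>
    obtain ⟨m, hm⟩ := hx
    obtain ⟨n, hn⟩ := hy
    exact ⟨m + n, by rw [mul_add, add_mul, hm, hn, add_smul]⟩
  | smul r x _ hx =>
    obtain ⟨m, hm⟩ := hx
    exact ⟨r * m, by rw [mul_smul_comm, smul_mul_assoc, hm, smul_smul]⟩

end Prime

/-! Part 8 -/

section Elem

/-- The left ideal `A p`. -/
def HP (p : A) : Submodule ℂ A where
  carrier := {x | x * p = x}
  add_mem' := fun {x y} hx hy => by
    simp only [Set.mem_ofPred_eq] at *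
    rw [add_mul, hx, hy]
  zero_mem' := by simp
  smul_mem' := fun c x hx => by
    simp only [Set.mem_ofPred_eq] at *
    rw [smul_mul_assoc, hx]

theorem mem_HP {p x : A} : x ∈ HP p ↔ x * p = x := Iff.rfl

theorem HP_mul {p : A} (x : HP p) : (x : A) * p = x := x.2

theorem isClosed_HP (p : A) : IsClosed (HP p : Set A) :=
  isClosed_eq (f := fun x : A => x * p) (g := fun x => x) (by fun_prop) continuous_id

instance (p : A) : CompleteSpace (HP p) := (isClosed_HP p).completeSpace_coe

variable {p : A}

theorem star_HP_mul (h : MP p) (x y : HP p) : star (x : A) * y = p * (star (x : A) * y) * p := by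
  rw [mul_assoc, mul_assoc, HP_mul y, ← mul_assoc]
  congr 1
  conv_lhs => rw [← HP_mul x, star_mul, h.star]

/-- The coefficient of the inner product. -/
def ipc (h : MP p) (x y : HP p) : ℂ := (h.min (star (x : A) * y)).choose

theorem ipc_spec (h : MP p) (x y : HP p) : star (x : A) * y = ipc h x y • p := by
  rw [star_HP_mul h]; exact (h.min (star (x : A) * y)).choose_spec

theorem ipc_eq (h : MP p) {x y : HP p} {μ : ℂ} (hμ : star (x : A) * y = μ • p) : ipc h x y = μ := by
  rw [ipc_spec h] at hμ
  exact smul_left_injective ℂ h.ne hμ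

theorem MP.norm (h : MP p) : ‖p‖ = 1 := by
  have h1 := CStarRing.norm_star_mul_self (x := p)
  rw [h.star, h.sq] at h1
  have h2 : ‖p‖ ≠ 0 := norm_ne_zero_iff.2 h.ne
  exact (mul_right_cancel₀ h2 (by rw [one_mul]; exact h1)).symm

theorem MP.nonneg (h : MP p) : 0 ≤ p := by
  have := star_mul_self_nonneg p
  rwa [h.star, h.sq] at this

theorem ipc_self (h : MP p) (x : HP p) : ipc h x x = ((‖x‖ ^ 2 : ℝ) : ℂ) := by
  have h1 := ipc_spec h x x
  have h2 : star (ipc h x x) = ipc h x x := by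
    have := congrArg star h1
    rw [star_mul, star_star, star_smul, h.star] at this
    rw [h1] at this
    exact (smul_left_injective ℂ h.ne this).symm
  have h3 : ‖x‖ ^ 2 = ‖ipc h x x‖ := by
    have := congrArg norm h1
    rw [CStarRing.norm_star_mul_self, norm_smul, h.norm, mul_one] at this
    rw [← this, sq]; rfl
  obtain ⟨r, hr⟩ := Complex.conj_eq_iff_real.1 h2
  rw [hr] at h1 h3 ⊢
  have hr0 : 0 ≤ r := by
    by_contra hneg
    push Not at hneg
    have h4 : 0 ≤ star (x : A) * x := star_mul_self_nonneg _
    rw [h1, Complex.coe_smul] at h4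
    have h5 : 0 ≤ (-r) • p := smul_nonneg (by linarith) h.nonneg
    rw [neg_smul] at h5
    have h6 : r • p = 0 := le_antisymm (neg_nonneg.1 h5) h4
    rcases smul_eq_zero.1 h6 with h7 | h7
    · linarith
    · exact h.ne h7
  rw [h3, Complex.norm_real, Real.norm_of_nonneg hr0]

instance instIPS [hp : Fact (MP p)] : InnerProductSpace ℂ (HP p) where
  inner x y := ipc hp.out x y
  norm_sq_eq_re_inner x := by
    rw [ipc_self]; simp [← Complex.ofReal_pow]
  conj_inner_symm x y := by
    symm
    refine ipc_eq _ ?_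
    have := congrArg star (ipc_spec hp.out y x)
    rw [star_mul, star_star, star_smul, hp.out.star] at this
    exact this
  add_left x y z := by
    refine ipc_eq _ ?_
    rw [Submodule.coe_add, star_add, add_mul, ipc_spec hp.out, ipc_spec hp.out, add_smul]
  smul_left x y r := by
    refine ipc_eq _ ?_
    rw [Submodule.coe_smul, star_smul, smul_mul_assoc, ipc_spec hp.out, smul_smul]
    rfl

theorem inner_spec [hp : Fact (MP p)] (x y : HP p) :
    star (x : A) * y = (inner ℂ x y : ℂ) • p := ipc_spec hp.out x y

theorem inner_eq' [hp : Fact (MP p)] {x y : HP p} {μ : ℂ} (hμ : star (x : A) * y = μ • p) :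
    (inner ℂ x y : ℂ) = μ := ipc_eq hp.out hμ

/-- Left multiplication. -/
def lmulHP (p : A) (a : A) : HP p →L[ℂ] HP p :=
  LinearMap.mkContinuous
    { toFun := fun x => ⟨a * x, by rw [mem_HP, mul_assoc, HP_mul]⟩
      map_add' := fun x y => by ext; simp [mul_add]
      map_smul' := fun c x => by ext; simp [mul_smul_comm] } ‖a‖ fun x => norm_mul_le a (x : A)

theorem lmulHP_coe (p a : A) (x : HP p) : ((lmulHP p a x : HP p) : A) = a * x := rfl

/-- The representation of `A` on `A p`. -/
def repHP (p : A) [hp : Fact (MP p)] : A →⋆ₙₐ[ℂ] (HP p →L[ℂ] HP p) where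
  toFun := lmulHP p
  map_smul' c a := by ext x; simp [lmulHP_coe, smul_mul_assoc]
  map_zero' := by ext x; simp [lmulHP_coe]
  map_add' a b := by ext x; simp [lmulHP_coe, add_mul]
  map_mul' a b := by ext x; simp [lmulHP_coe, mul_assoc]
  map_star' a := by
    rw [ContinuousLinearMap.star_eq_adjoint, ContinuousLinearMap.eq_adjoint_iff]
    intro x y
    refine inner_eq' ?_
    rw [lmulHP_coe, star_mul, star_star, ← inner_spec, lmulHP_coe, mul_assoc]

theorem repHP_coe (p a : A) [hp : Fact (MP p)] (x : HP p) : ((repHP p a x : HP p) : A) = a * x := rfl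

theorem repHP_rankOne [hp : Fact (MP p)] (x y z : HP p) :
    repHP p ((x : A) * star (y : A)) z = (inner ℂ y z : ℂ) • x := by
  ext
  rw [repHP_coe, mul_assoc, inner_spec, mul_smul_comm, HP_mul, Submodule.coe_smul]

theorem repHP_injective (hs : IsSimpleCStar A) [hp : Fact (MP p)] :
    Function.Injective (repHP p) := by
  rw [injective_iff_map_eq_zero]
  intro a ha
  by_contra h0
  obtain ⟨w, hw⟩ := prime_A hs h0 hp.out.ne
  apply hw
  have h1 : w * p ∈ HP p := by rw [mem_HP, mul_assoc, hp.out.sq]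
  have h2 := repHP_coe p a ⟨w * p, h1⟩
  rw [ha] at h2
  rw [mul_assoc]
  exact h2.symm

theorem isClosed_range_repHP (hs : IsSimpleCStar A) [hp : Fact (MP p)] :
    IsClosed (Set.range (repHP p)) :=
  (NonUnitalStarAlgHom.isometry (repHP p) (repHP_injective hs)).isClosedEmbedding.isClosed_range

theorem compact_mem_range (hs : IsSimpleCStar A) [hp : Fact (MP p)] {T : HP p →L[ℂ] HP p}
    (hT : IsCompactOperator T) : T ∈ Set.range (repHP p) := by
  rw [← (isClosed_range_repHP hs).closure_eq]
  refine (Metric.mem_closure_iff (α := HP p →L[ℂ] HP p)).2 ?_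
  intro ε hε
  have hK := hT.isCompact_closure_image_closedBall (f := (T : HP p →ₗ[ℂ] HP p)) 1
  obtain ⟨t, -, htf, htc⟩ := hK.finite_cover_balls (half_pos hε)
  set V := Submodule.span ℂ t with hV
  haveI : FiniteDimensional ℂ V := FiniteDimensional.span_of_finite ℂ htf
  set b := stdOrthonormalBasis ℂ V
  refine ⟨_, ⟨∑ i, ((b i : HP p) : A) * star ((T.adjoint (b i : HP p) : HP p) : A), rfl⟩, ?_⟩
  have hz : ∀ z, repHP p (∑ i, ((b i : HP p) : A) * star ((T.adjoint (b i : HP p) : HP p) : A)) z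
      = V.starProjection (T z) := by
    intro z
    rw [b.starProjection_eq_sum_rankOne, map_sum]
    simp only [ContinuousLinearMap.sum_apply, repHP_rankOne, InnerProductSpace.rankOne_apply,
      ContinuousLinearMap.adjoint_inner_left]
  refine lt_of_eq_of_lt (dist_eq_norm (E := HP p →L[ℂ] HP p) _ _) ?_
  refine lt_of_le_of_lt ?_ (half_lt_self hε)
  refine ContinuousLinearMap.opNorm_le_of_unit_norm (half_pos hε).le fun z hz1 => ?_
  rw [ContinuousLinearMap.sub_apply, hz, Submodule.starProjection_minimal]
  have hmem : T z ∈ closure ((T : HP p →ₗ[ℂ] HP p) '' Metric.closedBall 0 1) :=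
    subset_closure ⟨z, by simp [hz1], rfl⟩
  obtain ⟨y, hyt, hy⟩ := Set.mem_iUnion₂.1 (htc hmem)
  refine (ciInf_le ⟨0, Set.forall_mem_range.mpr fun _ => norm_nonneg _⟩
    (⟨y, Submodule.subset_span hyt⟩ : V)).trans ?_
  rw [mem_ball_iff_norm] at hy
  exact hy.le

theorem repHP_compact (hs : IsSimpleCStar A) [hp : Fact (MP p)] (a : A) :
    IsCompactOperator (repHP p a) := by
  have hcont : Continuous (repHP p) :=
    (NonUnitalStarAlgHom.isometry (repHP p) (repHP_injective hs)).continuous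
  refine simple_ideal hs (I := {a | IsCompactOperator (repHP p a)}) ?_ ?_ ?_ ?_ ?_ ?_
    (x := p) ?_ hp.out.ne a
  · exact (isClosed_setOfPred_isCompactOperator (σ₁₂ := RingHom.id ℂ) (M₁ := HP p)
      (M₂ := HP p)).preimage hcont
  · show IsCompactOperator (repHP p 0)
    rw [map_zero]; exact isCompactOperator_zero
  · intro x hx y hy
    show IsCompactOperator (repHP p (x + y))
    rw [map_add]; exact IsCompactOperator.add hx hy
  · intro x hx
    show IsCompactOperator (repHP p (-x))
    rw [map_neg]; exact IsCompactOperator.neg hx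
  · intro x y hy
    show IsCompactOperator (repHP p (x * y))
    rw [map_mul]
    exact IsCompactOperator.clm_comp hy (repHP p x)
  · intro x hx y
    show IsCompactOperator (repHP p (x * y))
    rw [map_mul]
    exact IsCompactOperator.comp_clm hx (repHP p y)
  · have hpp : p ∈ HP p := by rw [mem_HP, hp.out.sq]
    set P : HP p := ⟨p, hpp⟩
    have h1 : ∀ z, repHP p p z = (inner ℂ P z : ℂ) • P := by
      intro z
      have := repHP_rankOne P P z
      rwa [show (P : A) * star (P : A) = p by simp [P, hp.out.star, hp.out.sq]] at this
    have h2 : repHP p p = (ContinuousLinearMap.toSpanSingleton ℂ P).comp (innerSL ℂ P) := by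
      ext1 z; rw [h1]; simp
    show IsCompactOperator (repHP p p)
    rw [h2]
    have h3 : IsCompactOperator (ContinuousLinearMap.toSpanSingleton ℂ P : ℂ →L[ℂ] HP p) :=
      isCompactOperator_of_locallyCompactSpace_rng _
    exact h3.comp_clm (innerSL ℂ P)

theorem separable_HP (hs : IsSimpleCStar A) (hσ : SigmaUnital A) [hp : Fact (MP p)] :
    TopologicalSpace.SeparableSpace (HP p) := by
  obtain ⟨h, h0, hh⟩ := hσ
  have hc := repHP_compact hs (p := p) h
  have h1 : TopologicalSpace.IsSeparable (Set.range (repHP p h)) := by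
    have : Set.range (repHP p h) ⊆ ⋃ n : ℕ, closure ((repHP p h : HP p →ₗ[ℂ] HP p) ''
        Metric.closedBall 0 n) := by
      rintro _ ⟨x, rfl⟩
      obtain ⟨n, hn⟩ := exists_nat_ge ‖x‖
      exact Set.mem_iUnion.2 ⟨n, subset_closure ⟨x, by simpa using hn, rfl⟩⟩
    refine TopologicalSpace.IsSeparable.mono (TopologicalSpace.IsSeparable.iUnion fun n => ?_) this
    exact (hc.isCompact_closure_image_closedBall (f := (repHP p h : HP p →ₗ[ℂ] HP p)) n).isSeparable
  rw [← TopologicalSpace.isSeparable_univ_iff]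
  refine TopologicalSpace.IsSeparable.mono h1.closure fun x _ => ?_
  have hx : (x : A) ∈ her h := by rw [hh]; trivial
  -- the projection onto `A p`
  set π : A → HP p := fun y => ⟨y * p, by rw [mem_HP, mul_assoc, hp.out.sq]⟩ with hπ
  have hπc : Continuous π := by
    rw [hπ]; fun_prop
  have hπx : π x = x := Subtype.ext (HP_mul x)
  rw [← hπx]
  refine (map_mem_closure hπc hx ?_)
  rintro _ ⟨y, rfl⟩
  refine ⟨π (y * h), ?_⟩
  ext
  rw [repHP_coe]
  simp only [hπ, mul_assoc]

theorem elementary_of_MP (hs : IsSimpleCStar A) (hσ : SigmaUnital A) (hp : MP p) :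
    IsElementary A := by
  haveI : Fact (MP p) := ⟨hp⟩
  haveI := separable_HP (p := p) hs hσ
  obtain ⟨w, b, hb⟩ := exists_hilbertBasis ℂ (HP p)
  have hbo := b.orthonormal
  have hcw : Countable w := by
    have hd : Pairwise (Function.onFun Disjoint fun i : w => Metric.ball (b i) (1 / 2)) := by
      intro i j hij
      apply Metric.ball_disjoint_ball
      have h1 : ‖b i - b j‖ * ‖b i - b j‖ = 2 := by
        have := norm_sub_sq (𝕜 := ℂ) (b i) (b j)
        rw [hbo.2 hij, hbo.1 i, hbo.1 j] at this
        rw [← sq, this]; norm_num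
      rw [dist_eq_norm]
      nlinarith [norm_nonneg (b i - b j)]
    exact hd.countable_of_isOpen_disjoint (fun i => Metric.isOpen_ball)
      fun i => ⟨b i, Metric.mem_ball_self (by norm_num)⟩
  obtain ⟨f, hf⟩ := hcw.exists_injective_nat
  set e : w ≃ Set.range f := Equiv.ofInjective f hf
  have hspan : ⊤ ≤ (Submodule.span ℂ (Set.range (b ∘ e.symm))).topologicalClosure := by
    rw [e.symm.surjective.range_comp, b.dense_span]
  let b' : HilbertBasis (Set.range f) ℂ (HP p) :=
    HilbertBasis.mk (hbo.comp e.symm e.symm.injective) hspan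
  let E := b'.repr
  let ψ : A →⋆ₙₐ[ℂ] (lp (fun _ : Set.range f => ℂ) 2 →L[ℂ] lp (fun _ : Set.range f => ℂ) 2) :=
    (E.conjStarAlgEquiv : (HP p →L[ℂ] HP p) →⋆ₙₐ[ℂ] _).comp (repHP p)
  refine ⟨lp (fun _ : Set.range f => ℂ) 2, inferInstance, inferInstance, inferInstance, ψ, ?_, ?_⟩
  · intro x y hxy
    exact repHP_injective hs (E.conjStarAlgEquiv.injective hxy)
  · ext T
    constructor
    · rintro ⟨a, rfl⟩
      have h1 := (repHP_compact hs (p := p) a).clm_comp (E.toContinuousLinearEquiv : HP p →L[ℂ] lp (fun _ : Set.range f => ℂ) 2)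
      exact h1.comp_clm (E.symm.toContinuousLinearEquiv : lp (fun _ : Set.range f => ℂ) 2 →L[ℂ] HP p)
    · intro hT
      have h1 := (IsCompactOperator.clm_comp (f := T) hT (E.symm.toContinuousLinearEquiv : lp (fun _ : Set.range f => ℂ) 2 →L[ℂ] HP p)).comp_clm
        (E.toContinuousLinearEquiv : HP p →L[ℂ] lp (fun _ : Set.range f => ℂ) 2)
      obtain ⟨a, ha⟩ := compact_mem_range hs (T := E.conjStarAlgEquiv.symm T) h1
      refine ⟨a, ?_⟩
      show E.conjStarAlgEquiv (repHP p a) = T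
      rw [ha, StarAlgEquiv.apply_symm_apply]

end Elem

/-! Part 9 -/

section Small

theorem emb00_inj (SB : Stabilization A W) {x : A} (h : SB.emb 0 0 x = 0) : x = 0 := by
  have := SB.norm_emb 0 0 x
  rw [h, norm_zero] at this
  exact norm_eq_zero.1 this.symm

theorem emb00_her (SB : Stabilization A W) {c x : A} (hx : x ∈ her c) :
    SB.emb 0 0 x ∈ her (SB.emb 0 0 c) := by
  have := map_mem_closure (emb00_cont SB) hx (t := {x : W | ∃ y : W, x = SB.emb 0 0 c * y * SB.emb 0 0 c}) ?_
  · exact this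
  · rintro _ ⟨y, rfl⟩
    exact ⟨emb00 SB y, by rw [map_mul, map_mul]; rfl⟩

theorem exists_orth (hs : IsSimpleCStar A) (hσ : SigmaUnital A) (hne : ¬ IsElementary A)
    {c : A} (hc : 0 ≤ c) (hc0 : c ≠ 0) :
    ∃ x ∈ her c, ∃ z ∈ her c, 0 ≤ x ∧ 0 ≤ z ∧ x * z = 0 ∧ x ≠ 0 ∧ z ≠ 0 := by
  by_contra hcon
  push Not at hcon
  obtain ⟨p, hp⟩ := exists_MP hc hc0 (by
    intro x hx z hz h1 h2 h3
    by_cases h : x = 0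
    · exact Or.inl h
    · exact Or.inr (hcon x hx z hz h1 h2 h3 h))
  exact hne (elementary_of_MP hs hσ hp)

theorem halve (SB : Stabilization A W) (hs : IsSimpleCStar A) (hσ : SigmaUnital A)
    (hne : ¬ IsElementary A) {c : A} (hc : 0 ≤ c) (hc0 : c ≠ 0) :
    ∃ d ∈ her c, 0 ≤ d ∧ d ≠ 0 ∧ ∀ τ : QuasiTrace W,
      2 * dTau τ (SB.emb 0 0 d) ≤ dTau τ (SB.emb 0 0 c) := by
  obtain ⟨c1, h1, c2, h2, p1, p2, h12, n1, n2⟩ := exists_orth hs hσ hne hc hc0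
  obtain ⟨w, hw⟩ := prime_A hs n1 n2
  have s1 : star c1 = c1 := (IsSelfAdjoint.of_nonneg p1).star_eq
  have s2 : star c2 = c2 := (IsSelfAdjoint.of_nonneg p2).star_eq
  set x := c1 * w * c2 with hx
  have hxc : x ∈ her c := her_mul_mul w h1 h2
  have hsx : star x ∈ her c := her_star hc hxc
  have hd : star x * x ∈ her c := her_mul hsx hxc
  refine ⟨star x * x, hd, star_mul_self_nonneg _, ?_, fun τ => ?_⟩
  · intro h; exact hw (CStarRing.star_mul_self_eq_zero_iff _ |>.1 h)
  have e1 : SB.emb 0 0 (star x * x) = star (SB.emb 0 0 x) * SB.emb 0 0 x := by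
    rw [SB.emb_star, SB.emb_mul, if_pos rfl]
  have e2 : SB.emb 0 0 (x * star x) = SB.emb 0 0 x * star (SB.emb 0 0 x) := by
    rw [SB.emb_star, SB.emb_mul, if_pos rfl]
  have horth : (x * star x) * (star x * x) = 0 := by
    have : star x * star x = 0 := by
      rw [← star_mul, hx]
      have h21 : c2 * c1 = 0 := by
        have := congrArg star h12; rwa [star_mul, s1, s2, star_zero] at this
      rw [show c1 * w * c2 * (c1 * w * c2) = c1 * w * (c2 * c1) * (w * c2) by
        simp only [mul_assoc], h21]; simp
    rw [show x * star x * (star x * x) = x * (star x * star x) * x by simp only [mul_assoc], this]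
    simp
  have := dTau_add_le_of_mem_her τ (emb00_nonneg SB hc)
    (emb00_nonneg SB (mul_star_self_nonneg x)) (emb00_nonneg SB (star_mul_self_nonneg x))
    (by rw [SB.emb_mul, if_pos rfl, horth, map_zero])
    (emb00_her SB (her_mul hxc hsx)) (emb00_her SB hd)
  rw [e1, e2, ← dTau_swap, ← two_mul] at this
  rw [e1]; exact this

theorem small_A (SB : Stabilization A W) (hs : IsSimpleCStar A) (hσ : SigmaUnital A)
    (hne : ¬ IsElementary A) {c : A} (hc : 0 ≤ c) (hc0 : c ≠ 0) (n : ℕ) :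
    ∃ d ∈ her c, 0 ≤ d ∧ d ≠ 0 ∧ ∀ τ ∈ closure (QTSet SB),
      dTau τ (SB.emb 0 0 d) ≤ (2⁻¹ : ℝ≥0∞) ^ n := by
  induction n with
  | zero =>
    refine ⟨c, mem_her_self hc, hc, hc0, fun τ hτ => ?_⟩
    obtain ⟨s, -, hs1, hs2⟩ := exists_sqrt hc
    have := dTau_emb_le SB hτ 0 0 s
    rw [SB.emb_star, SB.emb_mul, if_pos rfl, hs1, hs2] at this
    rwa [pow_zero]
  | succ n ih =>
    obtain ⟨d, hd, h0, hn, hle⟩ := ih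
    obtain ⟨d', hd', h0', hn', hle'⟩ := halve SB hs hσ hne h0 hn
    refine ⟨d', her_subset hd hd', h0', hn', fun τ hτ => ?_⟩
    have := (hle' τ).trans (hle τ hτ)
    rw [pow_succ, ← div_eq_mul_inv, ENNReal.le_div_iff_mul_le (by simp) (by simp), mul_comm]
    exact this

theorem compress (SB : Stabilization A W) (j : ℕ) (β : A) (w : W) :
    star (SB.emb j 0 β) * w * SB.emb j 0 β ∈ Set.range (emb00 SB) := by
  have hiso : Isometry (emb00 SB) :=
    AddMonoidHomClass.isometry_of_norm (emb00 SB) (SB.norm_emb 0 0)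
  have hcl : IsClosed (Set.range (emb00 SB)) := hiso.isClosedEmbedding.isClosed_range
  refine (EI_dense SB).induction_on
    (p := fun w => star (SB.emb j 0 β) * w * SB.emb j 0 β ∈ Set.range (emb00 SB)) w
    (hcl.preimage (f := fun w => star (SB.emb j 0 β) * w * SB.emb j 0 β) (by fun_prop)) ?_
  intro p
  induction p using Finsupp.induction_linear with
  | zero => exact ⟨0, by simp⟩
  | add p q hp hq =>
    obtain ⟨u, hu⟩ := hp
    obtain ⟨v, hv⟩ := hq
    exact ⟨u + v, by rw [map_add, map_add, mul_add, add_mul, hu, hv]⟩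
  | single p a =>
    rw [EI_single, SB.emb_star, SB.emb_mul]
    split_ifs with h
    · rw [SB.emb_mul]
      split_ifs with h'
      · exact ⟨_, rfl⟩
      · exact ⟨0, by simp⟩
    · exact ⟨0, by simp⟩

theorem exists_col (SB : Stabilization A W) {s : W} (hs : s ≠ 0) (hss : star s = s) :
    ∃ (j : ℕ) (β : A), s * SB.emb j 0 β ≠ 0 := by
  by_contra hcon
  push Not at hcon
  have h1 : ∀ j k β, s * SB.emb j k β = 0 := by
    intro j k β
    have h2 : SB.emb j k β * star (SB.emb j k β) = SB.emb j 0 β * star (SB.emb j 0 β) := by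
      simp [SB.emb_star, SB.emb_mul]
    have h3 : (s * SB.emb j k β) * star (s * SB.emb j k β) = 0 := by
      rw [star_mul, mul_assoc, ← mul_assoc (SB.emb j k β), h2,
        show s * (SB.emb j 0 β * star (SB.emb j 0 β) * star s) =
          s * SB.emb j 0 β * (star (SB.emb j 0 β) * star s) by simp only [mul_assoc], hcon, zero_mul]
    exact CStarRing.mul_star_self_eq_zero_iff _ |>.1 h3
  have h4 := additive_ext SB (f := fun w => s * w) (g := fun _ => 0) (by fun_prop) (by fun_prop)
    (fun x y => mul_add s x y) (by simp) h1 s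
  have h5 : star s * s = 0 := by rw [hss]; exact h4
  exact hs (CStarRing.star_mul_self_eq_zero_iff _ |>.1 h5)

theorem small_W (SB : Stabilization A W) (hs : IsSimpleCStar A) (hσ : SigmaUnital A)
    (hne : ¬ IsElementary A) {b : W} (hb : 0 ≤ b) (hb0 : b ≠ 0) {r : ℝ≥0∞} (hr : r ≠ 0) :
    ∃ c ∈ her b, 0 ≤ c ∧ c ≠ 0 ∧ ∀ τ ∈ closure (QTSet SB), dTau τ c ≤ r := by
  have hss : star b = b := (IsSelfAdjoint.of_nonneg hb).star_eq
  obtain ⟨j, β, hx⟩ := exists_col SB hb0 hss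
  set x := b * SB.emb j 0 β with hxdef
  have hxx : star x * x = star (SB.emb j 0 β) * (b * b) * SB.emb j 0 β := by
    rw [hxdef, star_mul, hss]; simp only [mul_assoc]
  obtain ⟨d0, hd0⟩ := compress SB j β (b * b)
  rw [← hxx] at hd0
  have hd0n : d0 ≠ 0 := by
    rintro rfl
    rw [map_zero] at hd0
    exact hx (CStarRing.star_mul_self_eq_zero_iff _ |>.1 hd0.symm)
  have hd0s : star d0 = d0 := by
    rw [← sub_eq_zero]
    apply emb00_inj SB
    have : emb00 SB (star d0 - d0) = 0 := by
      rw [map_sub, map_star, hd0, star_mul, star_star, sub_self]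
    exact this
  set d1 := star d0 * d0 with hd1
  have hd1n : d1 ≠ 0 := fun h => hd0n (CStarRing.star_mul_self_eq_zero_iff _ |>.1 h)
  obtain ⟨n, hn⟩ := ENNReal.exists_inv_two_pow_lt hr
  obtain ⟨d, hd, hdp, hdn, hdle⟩ := small_A SB hs hσ hne (star_mul_self_nonneg d0) hd1n n
  have hep := emb00_nonneg SB hdp
  refine ⟨x * SB.emb 0 0 d * star x, ?_, ?_, ?_, fun τ hτ => ?_⟩
  · rw [hxdef, star_mul, hss,
      show b * SB.emb j 0 β * SB.emb 0 0 d * (star (SB.emb j 0 β) * b) =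
        b * (SB.emb j 0 β * SB.emb 0 0 d * star (SB.emb j 0 β)) * b by simp only [mul_assoc]]
    exact mul_mul_mem_her _ _
  · obtain ⟨k, -, hk, hkk⟩ := exists_sqrt hep
    have := mul_star_self_nonneg (x * k)
    rwa [star_mul, hk, show x * k * (k * star x) = x * (k * k) * star x by simp only [mul_assoc],
      hkk] at this
  · intro h0
    have h1 : emb00 SB (d0 * d * d0) = 0 := by
      rw [map_mul, map_mul, hd0, emb00_apply,
        show star x * x * SB.emb 0 0 d * (star x * x) =
          star x * (x * SB.emb 0 0 d * star x) * x by simp only [mul_assoc], h0]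
      simp
    have h2 : d0 * d * d0 = 0 := emb00_inj SB h1
    obtain ⟨k, -, hk, hkk⟩ := exists_sqrt hdp
    have h3 : star (k * d0) * (k * d0) = 0 := by
      rw [star_mul, hk, hd0s, ← h2, ← hkk]; simp only [mul_assoc]
    have h4 : k * d0 = 0 := CStarRing.star_mul_self_eq_zero_iff _ |>.1 h3
    have h5 : d * d1 = 0 := by
      rw [hd1, hd0s, ← hkk, show k * k * (d0 * d0) = k * (k * d0) * d0 by simp only [mul_assoc], h4]
      simp
    have h6 : d * d = 0 := mul_eq_zero_of_mem_her' hd h5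
    have h7 : star d * d = 0 := by rw [(IsSelfAdjoint.of_nonneg hdp).star_eq]; exact h6
    exact hdn (CStarRing.star_mul_self_eq_zero_iff _ |>.1 h7)
  · have := dTau_conj_le τ (star x) hep
    rw [star_star] at this
    exact this.trans ((hdle τ hτ).trans hn.le)

end Small

/-! Part 10 -/

section Final

theorem dTau_zero (τ : QuasiTrace W) : dTau τ 0 = 0 := by
  have : ∀ n : ℕ, fEps (1 / ((n : ℝ) + 1)) (0 : W) = 0 := fun n => by
    unfold fEps; exact cfcₙ_apply_zero
  simp only [dTau, this, τ.map_zero, iSup_const]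

theorem final_case2 (SB : Stabilization A W) (hσ : SigmaUnital A) (hsimple : IsSimpleCStar A)
    (hne : ¬ IsElementary A) (hqt : (QTSet SB).Nonempty)
    (a b : W) (ha : 0 ≤ a) (hb : 0 ≤ b) {r : ℝ≥0∞} (hr : r ≠ 0)
    (hlt : ∀ τ ∈ closure (QTSet SB), dTau τ a + r < dTau τ b) :
    ∃ b₀ b₁ : W, b₀ ∈ her b ∧ b₁ ∈ her b ∧ 0 ≤ b₀ ∧ 0 ≤ b₁ ∧ b₀ ≠ 0 ∧ b₁ ≠ 0 ∧
      ‖b₀‖ ≤ 1 ∧ ‖b₁‖ ≤ 1 ∧ b₀ * b₁ = 0 ∧ b₁ * b₀ = 0 ∧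
      ∀ τ ∈ closure (QTSet SB), dTau τ a < dTau τ b₁ := by
  obtain ⟨τ₀, hτ₀'⟩ := hqt
  have hτ₀ : τ₀ ∈ closure (QTSet SB) := subset_closure hτ₀'
  have hb0 : b ≠ 0 := by
    rintro rfl
    have := hlt τ₀ hτ₀
    rw [dTau_zero] at this
    exact not_lt_bot this
  obtain ⟨c, hcb, hc, hc0, hcle⟩ := small_W SB hsimple hσ hne hb hb0 hr
  obtain ⟨ε, hε, hεn⟩ := fEps_ne_zero hc hc0
  set e := fEps ε c with he
  set b0 := fEps (2 * ε) c with hb0def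
  have hes : star e = e := fEps_star _ _
  have h1 : e * b0 = b0 := fEps_mul_fEps hε (by linarith) c hc
  have h2 : b0 * e = b0 := fEps_mul_fEps' hε (by linarith) c hc
  have hec : e ∈ her c := fEps_mem_her hc ε
  have heb : e ∈ her b := her_subset hcb hec
  have hbb := mem_her_self hb
  set y := b - e * b - b * e + e * b * e with hy
  have hy0 : 0 ≤ y := conj_one_sub_nonneg hb hes
  have hyb : y ∈ her b :=
    her_add (her_sub (her_sub hbb (her_mul heb hbb)) (her_mul hbb heb)) (her_mul_mul b heb heb)
  have h3 : b0 * y = 0 := by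
    rw [hy, mul_add, mul_sub, mul_sub, ← mul_assoc b0 e b, h2, ← mul_assoc b0 (e * b) e,
      ← mul_assoc b0 e b, h2, ← mul_assoc]
    abel
  have h4 : y * b0 = 0 := by
    rw [hy, add_mul, sub_mul, sub_mul, mul_assoc b e b0, h1, mul_assoc (e * b) e b0, h1]
    abel
  have hdy : ∀ τ ∈ closure (QTSet SB), dTau τ a < dTau τ y := by
    intro τ hτ
    obtain ⟨s, hs0, hss, hsb⟩ := exists_sqrt hb
    have h5 := dTau_sq_add_le SB τ (s - s * e) (s * e)
    rw [sub_add_cancel, hss, hsb,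
      show star (s - s * e) * (s - s * e) = y by
        rw [star_sub, star_mul, hss, hes, hy, ← hsb]; noncomm_ring,
      show star (s * e) * (s * e) = e * b * e by
        rw [star_mul, hss, hes, ← hsb]; simp only [mul_assoc]] at h5
    have h6 : dTau τ (e * b * e) ≤ r :=
      (dTau_le_of_mem_her τ hc (conj_nonneg' hes hb) (her_mul_mul b hec hec)).trans (hcle τ hτ)
    have h7 : dTau τ a + r < dTau τ y + r :=
      (hlt τ hτ).trans_le (h5.trans (by gcongr))
    exact lt_of_add_lt_add_right h7
  set t : ℝ := (max 1 ‖y‖)⁻¹ with ht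
  have hm : 0 < max 1 ‖y‖ := lt_of_lt_of_le one_pos (le_max_left _ _)
  have ht0 : 0 < t := inv_pos.2 hm
  have hfin : ∀ τ ∈ closure (QTSet SB), dTau τ a < dTau τ (t • y) := fun τ hτ => by
    rw [dTau_smul τ ht0 hy0]; exact hdy τ hτ
  refine ⟨b0, t • y, her_subset hcb (fEps_mem_her hc _), her_smul t hyb, fEps_nonneg _ _,
    smul_nonneg ht0.le hy0, hεn, ?_, fEps_norm_le _ _, ?_, ?_, ?_, hfin⟩
  · intro h
    have := hfin τ₀ hτ₀
    rw [h, dTau_zero] at this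
    exact not_lt_bot this
  · rw [norm_smul, Real.norm_of_nonneg ht0.le, ht, inv_mul_le_iff₀ hm, mul_one]
    exact le_max_right _ _
  · rw [mul_smul_comm, h3, smul_zero]
  · rw [smul_mul_assoc, h4, smul_zero]

theorem case1_to_case2 (SB : Stabilization A W) (a b : W) (ha : 0 ≤ a) (hb : 0 ≤ b)
    (h : ∀ τ ∈ closure (QTSet SB),
      dTau τ a + omegaOn (closure (QTSet SB)) a < dTau τ b) :
    ∃ r : ℝ≥0∞, r ≠ 0 ∧ ∀ τ ∈ closure (QTSet SB), dTau τ a + r < dTau τ b := by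
  by_cases hω : omegaOn (closure (QTSet SB)) a = 0
  swap
  · exact ⟨_, hω, h⟩
  simp only [hω, add_zero] at h
  refine (isCompact_S SB).induction_on
    (p := fun s => ∃ r : ℝ≥0∞, r ≠ 0 ∧ ∀ τ ∈ s, dTau τ a + r < dTau τ b) ?_ ?_ ?_ ?_
  · exact ⟨1, one_ne_zero, by simp⟩
  · rintro s t hst ⟨r, hr, H⟩
    exact ⟨r, hr, fun τ hτ => H τ (hst hτ)⟩
  · rintro s t ⟨r, hr, H⟩ ⟨r', hr', H'⟩
    refine ⟨min r r', (lt_min (pos_iff_ne_zero.2 hr) (pos_iff_ne_zero.2 hr')).ne', ?_⟩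
    rintro τ (hτ | hτ)
    · exact lt_of_le_of_lt (by gcongr; exact min_le_left _ _) (H τ hτ)
    · exact lt_of_le_of_lt (by gcongr; exact min_le_right _ _) (H' τ hτ)
  · intro τ₀ hτ₀
    obtain ⟨m, hm⟩ := lt_iSup_iff.1 (h τ₀ hτ₀)
    obtain ⟨u, hu, hum⟩ := exists_between hm
    obtain ⟨v, huv, hvm⟩ := exists_between hum
    have hr : (v - u) / 2 ≠ 0 := (ENNReal.half_pos (tsub_pos_of_lt huv).ne').ne'
    have hω' : omegaOn (closure (QTSet SB)) a < (v - u) / 2 := by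
      rw [hω]; exact pos_iff_ne_zero.2 hr
    obtain ⟨n, hn⟩ := iInf_lt_iff.1 hω'
    have c1 := continuous_eval (fEps_mem_pedersen ha (one_div_pos' n))
    have c2 := continuous_eval (fEps_mem_pedersen hb (one_div_pos' m))
    refine ⟨closure (QTSet SB) ∩ ({τ | τ.toFun (fEps (1 / ((n : ℝ) + 1)) a) < u} ∩
      {τ | v < τ.toFun (fEps (1 / ((m : ℝ) + 1)) b)}), ?_, (v - u) / 2, hr, ?_⟩
    · refine inter_mem_nhdsWithin _ (IsOpen.mem_nhds ?_ ⟨?_, hvm⟩)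
      · exact (isOpen_lt c1 continuous_const).inter (isOpen_lt continuous_const c2)
      · exact (tau_fEps_le_dTau τ₀ ha _).trans_lt hu
    · rintro τ ⟨hτ, h1, h2⟩
      have h3 : dTau τ a - τ.toFun (fEps (1 / ((n : ℝ) + 1)) a) ≤ (v - u) / 2 :=
        (le_iSup₂ (f := fun (τ : QuasiTrace W) (_ : τ ∈ closure (QTSet SB)) =>
          dTau τ a - τ.toFun (fEps (1 / ((n : ℝ) + 1)) a)) τ hτ).trans hn.le
      have h4 := tsub_le_iff_left.1 h3
      calc dTau τ a + (v - u) / 2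
          ≤ τ.toFun (fEps (1 / ((n : ℝ) + 1)) a) + (v - u) / 2 + (v - u) / 2 := by gcongr
        _ = τ.toFun (fEps (1 / ((n : ℝ) + 1)) a) + (v - u) := by
            rw [add_assoc, ENNReal.add_halves]
        _ ≤ u + (v - u) := by gcongr; exact le_of_lt h1
        _ = v := add_tsub_cancel_of_le huv.le
        _ < _ := h2
        _ ≤ dTau τ b := tau_fEps_le_dTau τ hb _

end Final
/-- **Lemma.** Let `A` be a σ-unital non-elementary algebraically simple C*-algebra with
`QT(A) ≠ ∅` and `a, b ∈ (A ⊗ K)₊`.  If either (1) `d_τ(a) + ω(a) < d_τ(b)` for all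
`τ ∈ \overline{QT(A)}^w`, or (2) there is `r > 0` with `d_τ(a) + r < d_τ(b)` for all such `τ`,
then there are two mutually orthogonal nonzero positive contractions `b₀, b₁ ∈ Her(b)` with
`d_τ(a) < d_τ(b₁)` for all `τ ∈ \overline{QT(A)}^w`. -/
theorem exists_two_orthogonal_dominating
    (SB : Stabilization A W)
    (hσ : SigmaUnital A) (hsimple : IsSimpleCStar A) (hne : ¬ IsElementary A)
    (halg : pedersen A = Set.univ) (hqt : (QTSet SB).Nonempty)
    (a b : W) (ha : 0 ≤ a) (hb : 0 ≤ b)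
    (hcase :
      (∀ τ ∈ closure (QTSet SB),
          dTau τ a + omegaOn (closure (QTSet SB)) a < dTau τ b) ∨
      (∃ r : ℝ, 0 < r ∧ ∀ τ ∈ closure (QTSet SB),
          dTau τ a + ENNReal.ofReal r < dTau τ b)) :
    ∃ b₀ b₁ : W, b₀ ∈ her b ∧ b₁ ∈ her b ∧ 0 ≤ b₀ ∧ 0 ≤ b₁ ∧ b₀ ≠ 0 ∧ b₁ ≠ 0 ∧
      ‖b₀‖ ≤ 1 ∧ ‖b₁‖ ≤ 1 ∧ b₀ * b₁ = 0 ∧ b₁ * b₀ = 0 ∧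
      ∀ τ ∈ closure (QTSet SB), dTau τ a < dTau τ b₁ := by
  obtain ⟨r, hr, hlt⟩ : ∃ r : ℝ≥0∞, r ≠ 0 ∧
      ∀ τ ∈ closure (QTSet SB), dTau τ a + r < dTau τ b := by
    rcases hcase with h | ⟨r, hr, h⟩
    · exact case1_to_case2 SB a b ha hb h
    · exact ⟨ENNReal.ofReal r, (ENNReal.ofReal_pos.2 hr).ne', h⟩
  exact final_case2 SB hσ hsimple hne hqt a b ha hb hr hlt
end Paper
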